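/- arXiv:1806.07953 — 6 statements merged into one kernel-verified Lean document; each statement's English description precedes it below -/
import Mathlib

section
/- Let α ≥ 1 and let d be the Carnot–Carathéodory distance on ℝ³ induced by X₁ and X₂. For every η > 0 there exist constants c, C > 0, depending only on α and η, such that for every p = (x,y,z) ∈ ℝ³ and r > 0: (i) if |x| ≥ η r then c · r⁴ |x|^{α−1} ≤ ℒ³(B(p,r)) ≤ C · r⁴ |x|^{α−1}; (ii) if |x| ≤ η r then c · r^{α+3} ≤ ℒ³(B(p,r)) ≤ C · r^{α+3}. Here ℒ³ is the Lebesgue measure on ℝ³. -/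
open MeasureTheory

/-- The minimum appearing in the quasi-distance `δ`, with the conventions of the paper:
it equals `|ζ| ^ (1/(α+1))` when `x = 0` (and it is `0` when `ζ = 0`). -/
noncomputable def ccMin (α x ζ : ℝ) : ℝ :=
  if x = 0 then |ζ| ^ (1 / (α + 1))
  else min (|ζ| ^ (1 / (α + 1))) (|ζ| ^ ((1 : ℝ) / 2) / |x| ^ ((α - 1) / 2))

/-- A horizontal curve on `[0,T]` for the vector fields `X₁ = ∂ₓ`, `X₂ = ∂_y + |x|^α ∂_z`:
a Lipschitz curve whose components have a.e. derivatives `(h₁, h₂, |x|^α h₂)` with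
`h₁² + h₂² ≤ 1`. -/
def IsHorizontal (α T : ℝ) (γ : ℝ → ℝ × ℝ × ℝ) : Prop :=
  (∃ K, LipschitzOnWith K γ (Set.Icc 0 T)) ∧
  ∃ h₁ h₂ : ℝ → ℝ, Measurable h₁ ∧ Measurable h₂ ∧
    (∀ t, (h₁ t) ^ 2 + (h₂ t) ^ 2 ≤ 1) ∧
    ∀ᵐ t ∂(volume.restrict (Set.Ioo 0 T)),
      HasDerivAt (fun s => (γ s).1) (h₁ t) t ∧
      HasDerivAt (fun s => (γ s).2.1) (h₂ t) t ∧
      HasDerivAt (fun s => (γ s).2.2) (|(γ t).1| ^ α * h₂ t) t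

/-- The Carnot–Carathéodory distance associated with `X₁, X₂`. -/
noncomputable def ccDist (α : ℝ) (p q : ℝ × ℝ × ℝ) : ℝ :=
  sInf {T : ℝ | 0 < T ∧ ∃ γ : ℝ → ℝ × ℝ × ℝ, IsHorizontal α T γ ∧ γ 0 = p ∧ γ T = q}

/-- The Carnot–Carathéodory ball. -/
def ccBall (α : ℝ) (p : ℝ × ℝ × ℝ) (r : ℝ) : Set (ℝ × ℝ × ℝ) :=
  {q | ccDist α p q < r}

/-- The algebraic quasi-distance `δ`. -/
noncomputable def deltaDist (α : ℝ) (p q : ℝ × ℝ × ℝ) : ℝ :=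
  |q.1 - p.1| + |q.2.1 - p.2.1| +
    ccMin α p.1 (p.2.2 - q.2.2 + |p.1| ^ α * (q.2.1 - p.2.1))

/-- The perimeter measure `μ = |x|^α ℒ²` on the plane `z = 0`, identified with `ℝ²`. -/
noncomputable def planeMeasure (α : ℝ) : Measure (ℝ × ℝ) :=
  volume.withDensity (fun u => ENNReal.ofReal (|u.1| ^ α))

/-- `q` can be joined to `p` in time `T > 0` by a horizontal curve. -/
def Reach (α T : ℝ) (p q : ℝ × ℝ × ℝ) : Prop :=
  0 < T ∧ ∃ γ : ℝ → ℝ × ℝ × ℝ, IsHorizontal α T γ ∧ γ 0 = p ∧ γ T = q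

lemma Reach.of_line {α T : ℝ} {p : ℝ × ℝ × ℝ} (hT : 0 < T) (a b : ℝ) (hab : a ^ 2 + b ^ 2 ≤ 1)
    (h : a = 0 ∨ b = 0) :
    Reach α T p (p.1 + T * a, p.2.1 + T * b, p.2.2 + T * (|p.1| ^ α * b)) := by
  obtain ⟨x, y, z⟩ := p
  refine ⟨hT, fun t => (x + t * a, y + t * b, z + t * (|x| ^ α * b)), ⟨?_, ?_⟩, ?_, rfl⟩
  · have h1 : ContDiff ℝ 1 (fun t : ℝ => (x + t * a, y + t * b, z + t * (|x| ^ α * b))) := by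
      fun_prop
    obtain ⟨K, hK⟩ := h1.contDiffOn.exists_lipschitzOnWith (s := Set.Icc (0 : ℝ) T) one_ne_zero
      (convex_Icc _ _) isCompact_Icc
    exact ⟨K, hK⟩
  · refine ⟨fun _ => a, fun _ => b, measurable_const, measurable_const, fun _ => hab, ?_⟩
    refine Filter.Eventually.of_forall fun t => ?_
    have key : ∀ c d : ℝ, HasDerivAt (fun s : ℝ => c + s * d) d t := fun c d => by
      simpa using ((hasDerivAt_id t).mul_const d).const_add c
    refine ⟨key _ _, key _ _, ?_⟩
    rcases h with rfl | rfl
    · simpa using key z (|x| ^ α * b)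
    · simpa using key z (|x| ^ α * 0)
  · simp

lemma Reach.trans {α S T : ℝ} {p q r : ℝ × ℝ × ℝ} (h1 : Reach α S p q) (h2 : Reach α T q r) :
    Reach α (S + T) p r := by
  obtain ⟨hS, γ, ⟨⟨K, hK⟩, a, b, ha, hb, hab, hγ⟩, hγ0, hγS⟩ := h1
  obtain ⟨hT, δ, ⟨⟨L, hL⟩, a', b', ha', hb', hab', hδ⟩, hδ0, hδT⟩ := h2
  set ε : ℝ → ℝ × ℝ × ℝ := fun t => if t ≤ S then γ t else δ (t - S) with hε
  have e1 : ∀ t, t ≤ S → ε t = γ t := fun t ht => by simp [hε, ht]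
  have e2 : ∀ t, S ≤ t → ε t = δ (t - S) := fun t ht => by
    rcases ht.eq_or_lt with rfl | ht
    · simp [hε, hγS, hδ0]
    · simp [hε, not_le.2 ht]
  refine ⟨by positivity, ε, ⟨⟨max K L, ?_⟩, fun t => if t ≤ S then a t else a' (t - S),
    fun t => if t ≤ S then b t else b' (t - S), ?_, ?_, ?_, ?_⟩, ?_, ?_⟩
  · have dK : ∀ s t, 0 ≤ s → s ≤ t → t ≤ S → dist (ε s) (ε t) ≤ (max K L : NNReal) * (t - s) := by
      intro s t hs hst ht
      rw [e1 s (hst.trans ht), e1 t ht]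
      have := hK.dist_le_mul s ⟨hs, hst.trans ht⟩ t ⟨hs.trans hst, ht⟩
      rw [Real.dist_eq, abs_sub_comm, abs_of_nonneg (sub_nonneg.2 hst)] at this
      refine this.trans (mul_le_mul_of_nonneg_right ?_ (sub_nonneg.2 hst))
      exact_mod_cast le_max_left K L
    have dL : ∀ s t, S ≤ s → s ≤ t → t ≤ S + T →
        dist (ε s) (ε t) ≤ (max K L : NNReal) * (t - s) := by
      intro s t hs hst ht
      rw [e2 s hs, e2 t (hs.trans hst)]
      have := hL.dist_le_mul (s - S) ⟨by linarith, by linarith⟩ (t - S) ⟨by linarith, by linarith⟩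
      rw [Real.dist_eq, abs_sub_comm, sub_sub_sub_cancel_right,
        abs_of_nonneg (sub_nonneg.2 hst)] at this
      refine this.trans (mul_le_mul_of_nonneg_right ?_ (sub_nonneg.2 hst))
      exact_mod_cast le_max_right K L
    have dd : ∀ s t, 0 ≤ s → s ≤ t → t ≤ S + T →
        dist (ε s) (ε t) ≤ (max K L : NNReal) * (t - s) := by
      intro s t hs hst ht
      rcases le_total t S with h | h
      · exact dK s t hs hst h
      rcases le_total S s with h' | h'
      · exact dL s t h' hst ht
      have := dist_triangle (ε s) (ε S) (ε t)
      have := dK s S hs h' le_rfl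
      have := dL S t le_rfl h ht
      linarith
    refine LipschitzOnWith.of_dist_le_mul fun s hs t ht => ?_
    rcases le_total s t with h | h
    · rw [Real.dist_eq, abs_sub_comm, abs_of_nonneg (sub_nonneg.2 h)]
      exact dd s t hs.1 h ht.2
    · rw [Real.dist_eq, abs_of_nonneg (sub_nonneg.2 h), dist_comm]
      exact dd t s ht.1 h hs.2
  · exact Measurable.ite measurableSet_Iic ha (ha'.comp (measurable_id.sub_const S))
  · exact Measurable.ite measurableSet_Iic hb (hb'.comp (measurable_id.sub_const S))
  · intro t
    by_cases h : t ≤ S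
    · simpa [h] using hab t
    · simpa [h] using hab' (t - S)
  · rw [ae_restrict_iff' measurableSet_Ioo] at hγ hδ ⊢
    have hδ' := (measurePreserving_sub_right volume S).quasiMeasurePreserving.ae hδ
    have hne : ∀ᵐ t ∂(volume : Measure ℝ), t ≠ S := by
      simp [ae_iff]
    filter_upwards [hγ, hδ', hne] with t h1 h2 h3 ht
    rcases lt_or_gt_of_ne h3 with h | h
    · have ev : ∀ᶠ s in nhds t, ε s = γ s := by
        filter_upwards [Iio_mem_nhds h] with s hs using e1 s (le_of_lt hs)
      obtain ⟨d1, d2, d3⟩ := h1 ⟨ht.1, h⟩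
      simp only [h.le, if_true, e1 t h.le]
      exact ⟨d1.congr_of_eventuallyEq (ev.mono fun s hs => by simp only [hs]),
        d2.congr_of_eventuallyEq (ev.mono fun s hs => by simp only [hs]),
        d3.congr_of_eventuallyEq (ev.mono fun s hs => by simp only [hs])⟩
    · have ev : ∀ᶠ s in nhds t, ε s = δ (s - S) := by
        filter_upwards [Ioi_mem_nhds h] with s hs using e2 s (le_of_lt hs)
      obtain ⟨d1, d2, d3⟩ := h2 ⟨by linarith, by linarith [ht.2]⟩
      simp only [not_le.2 h, if_false, e2 t h.le]
      exact ⟨(d1.comp_sub_const t S).congr_of_eventuallyEq (ev.mono fun s hs => by simp only [hs]),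
        (d2.comp_sub_const t S).congr_of_eventuallyEq (ev.mono fun s hs => by simp only [hs]),
        (d3.comp_sub_const t S).congr_of_eventuallyEq (ev.mono fun s hs => by simp only [hs])⟩
  · rw [e1 0 hS.le, hγ0]
  · rw [e2 _ (by linarith), add_sub_cancel_left, hδT]

lemma Reach.x {α T x y z x' : ℝ} (hT : 0 < T) (h : |x' - x| ≤ T) :
    Reach α T (x, y, z) (x', y, z) := by
  have := Reach.of_line (α := α) (p := (x, y, z)) hT ((x' - x) / T) 0
    (by
      have : |(x' - x) / T| ≤ 1 := by rwa [abs_div, abs_of_pos hT, div_le_one hT]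
      have := sq_le_one_iff_abs_le_one _ |>.2 this
      simpa using this) (Or.inr rfl)
  simpa [mul_div_cancel₀ _ hT.ne'] using this

lemma Reach.y {α T x y z d : ℝ} (hT : 0 < T) (h : |d| ≤ T) :
    Reach α T (x, y, z) (x, y + d, z + |x| ^ α * d) := by
  have := Reach.of_line (α := α) (p := (x, y, z)) hT 0 (d / T)
    (by
      have : |d / T| ≤ 1 := by rwa [abs_div, abs_of_pos hT, div_le_one hT]
      have := sq_le_one_iff_abs_le_one _ |>.2 this
      simpa using this) (Or.inl rfl)
  have e : T * (|x| ^ α * (d / T)) = |x| ^ α * d := by field_simp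
  simpa [mul_div_cancel₀ _ hT.ne', e] using this

/-- the four-turn path -/
lemma Reach.path {α τ x y z x' u v M N : ℝ} (hτ : 0 < τ) (hM : 0 < M) (hN : 0 < N)
    (hu : |u| ≤ M) (hv : |v| ≤ N) :
    Reach α (τ + M + τ + N + (|x' - x| + 2 * τ)) (x, y, z)
      (x', y + u + v, z + (|x| + τ) ^ α * u + (|x| + 2 * τ) ^ α * v) := by
  obtain ⟨s, hs, hs'⟩ : ∃ s : ℝ, |s| = 1 ∧ ∀ t, 0 ≤ t → |x + s * t| = |x| + t := by
    rcases le_total 0 x with h | h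
    · exact ⟨1, by simp, fun t ht => by
        rw [abs_of_nonneg h, abs_of_nonneg (by linarith)]; ring⟩
    · exact ⟨-1, by simp, fun t ht => by
        rw [abs_of_nonpos h, abs_of_nonpos (by linarith)]; ring⟩
  have a1 : |s * τ| = τ := by rw [abs_mul, hs, one_mul, abs_of_pos hτ]
  have r1 : Reach α τ (x, y, z) (x + s * τ, y, z) := Reach.x hτ (by rw [add_sub_cancel_left, a1])
  have r2 := Reach.y (α := α) (x := x + s * τ) (y := y) (z := z) hM hu
  have r3 : Reach α τ (x + s * τ, y + u, z + |x + s * τ| ^ α * u)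
      (x + s * (2 * τ), y + u, z + |x + s * τ| ^ α * u) := Reach.x hτ (by
        rw [show x + s * (2 * τ) - (x + s * τ) = s * τ by ring, a1])
  have r4 := Reach.y (α := α) (x := x + s * (2 * τ)) (y := y + u)
    (z := z + |x + s * τ| ^ α * u) hN hv
  have r5 : Reach α (|x' - x| + 2 * τ) (x + s * (2 * τ), y + u + v,
      z + |x + s * τ| ^ α * u + |x + s * (2 * τ)| ^ α * v) (x', y + u + v,
      z + |x + s * τ| ^ α * u + |x + s * (2 * τ)| ^ α * v) := Reach.x (by positivity) (by
        have := abs_sub (x' - x) (s * (2 * τ))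
        rw [abs_mul s, hs, one_mul, abs_of_pos (by positivity : 0 < 2 * τ)] at this
        rwa [show x' - (x + s * (2 * τ)) = x' - x - s * (2 * τ) by ring])
  have := (((r1.trans r2).trans r3).trans r4).trans r5
  rwa [hs' τ hτ.le, hs' (2 * τ) (by positivity)] at this

lemma rpow_gap {α a τ : ℝ} (hα : 1 ≤ α) (ha : 0 < a) (hτ : 0 < τ) :
    τ * a ^ (α - 1) ≤ (a + τ) ^ α - a ^ α := by
  have h1 : ∀ b : ℝ, 0 < b → b ^ α = b * b ^ (α - 1) := fun b hb => by
    rw [Real.rpow_sub_one hb.ne']; field_simp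
  rw [h1 a ha, h1 (a + τ) (by positivity)]
  have : a ^ (α - 1) ≤ (a + τ) ^ (α - 1) :=
    Real.rpow_le_rpow ha.le (by linarith) (by linarith)
  nlinarith

lemma rpow_lip {α a b R : ℝ} (hα : 1 ≤ α) (ha : 0 ≤ a) (hb : 0 ≤ b) (haR : a ≤ R) (hbR : b ≤ R) :
    |a ^ α - b ^ α| ≤ α * R ^ (α - 1) * |a - b| := by
  have := Convex.norm_image_sub_le_of_norm_hasDerivWithin_le (f := fun t : ℝ => t ^ α)
    (f' := fun t => α * t ^ (α - 1)) (s := Set.Icc 0 R) (C := α * R ^ (α - 1)) (x := b) (y := a)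
    (fun t _ => (Real.hasDerivAt_rpow_const (Or.inr hα)).hasDerivWithinAt)
    (fun t ht => by
      have h0 := Real.rpow_nonneg ht.1 (α - 1)
      rw [Real.norm_of_nonneg (by positivity)]
      exact mul_le_mul_of_nonneg_left (Real.rpow_le_rpow ht.1 ht.2 (by linarith)) (by linarith))
    (convex_Icc _ _) ⟨hb, hbR⟩ ⟨ha, haR⟩
  simpa [Real.norm_eq_abs] using this

lemma Reach.exists_time (α : ℝ) (hα : 1 ≤ α) (p q : ℝ × ℝ × ℝ) : ∃ T, Reach α T p q := by
  obtain ⟨x, y, z⟩ := p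
  obtain ⟨x', y', z'⟩ := q
  have hg : 0 < (|x| + 2 * 1) ^ α - (|x| + 1) ^ α := by
    have h := rpow_gap (a := |x| + 1) (τ := 1) hα (by positivity) one_pos
    have : 0 < 1 * (|x| + 1) ^ (α - 1) := by positivity
    rw [show |x| + 2 * 1 = |x| + 1 + 1 by ring]
    linarith
  set A := (|x| + 1) ^ α with hA
  set B := (|x| + 2 * 1) ^ α with hB
  set v := (z' - z - A * (y' - y)) / (B - A) with hv
  have hv' : (B - A) * v = z' - z - A * (y' - y) := by rw [hv]; field_simp
  have := Reach.path (α := α) (τ := 1) (x := x) (y := y) (z := z) (x' := x') (u := y' - y - v)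
    (v := v) (M := |y' - y - v| + 1) (N := |v| + 1) one_pos (by positivity) (by positivity)
    (by linarith) (by linarith)
  rw [← hA, ← hB, show y + (y' - y - v) + v = y' by ring,
    show z + A * (y' - y - v) + B * v = z' by linear_combination hv'] at this
  exact ⟨_, this⟩

lemma mem_ccBall_iff (α : ℝ) (hα : 1 ≤ α) (p q : ℝ × ℝ × ℝ) (r : ℝ) :
    q ∈ ccBall α p r ↔ ∃ T, T < r ∧ Reach α T p q := by
  change sInf {T : ℝ | Reach α T p q} < r ↔ _
  constructor
  · intro h
    obtain ⟨T, hT, hTr⟩ := exists_lt_of_csInf_lt (Reach.exists_time α hα p q) h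
    exact ⟨T, hTr, hT⟩
  · rintro ⟨T, hTr, hT⟩
    exact lt_of_le_of_lt (csInf_le ⟨0, fun S hS => hS.1.le⟩ hT) hTr

lemma lip_bound {f : ℝ → ℝ} {K : NNReal} {T M : ℝ} (hT : 0 ≤ T)
    (hf : LipschitzOnWith K f (Set.Icc 0 T))
    (h : ∀ᵐ t ∂(volume.restrict (Set.Ioo 0 T)), ∃ g, HasDerivAt f g t ∧ |g| ≤ M) :
    |f T - f 0| ≤ M * T := by
  rw [← Set.uIcc_of_le hT] at hf
  rw [← hf.absolutelyContinuousOnInterval.integral_deriv_eq_sub]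
  have := intervalIntegral.norm_integral_le_of_norm_le_const_ae (f := deriv f) (a := 0) (b := T)
    (C := M) (by
      rw [ae_restrict_iff' measurableSet_Ioo] at h
      have hne : ∀ᵐ t ∂(volume : Measure ℝ), t ≠ T := by simp [ae_iff]
      filter_upwards [h, hne] with t h1 h2 h3
      rw [Set.uIoc_of_le hT] at h3
      obtain ⟨g, hg, hgM⟩ := h1 ⟨h3.1, lt_of_le_of_ne h3.2 h2⟩
      rw [hg.deriv]; exact hgM)
  simpa [abs_of_nonneg hT] using this

lemma Reach.bound {α T : ℝ} {p q : ℝ × ℝ × ℝ} (hα : 1 ≤ α) (h : Reach α T p q) :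
    |q.1 - p.1| ≤ T ∧ |q.2.1 - p.2.1| ≤ T ∧
    |q.2.2 - p.2.2 - |p.1| ^ α * (q.2.1 - p.2.1)| ≤ α * (|p.1| + T) ^ (α - 1) * T * T := by
  obtain ⟨hT, γ, ⟨⟨K, hK⟩, a, b, ha, hb, hab, hγ⟩, hγ0, hγS⟩ := h
  have la : ∀ t, |a t| ≤ 1 := fun t =>
    (sq_le_one_iff_abs_le_one _).1 (by nlinarith [hab t, sq_nonneg (b t)])
  have lb : ∀ t, |b t| ≤ 1 := fun t =>
    (sq_le_one_iff_abs_le_one _).1 (by nlinarith [hab t, sq_nonneg (a t)])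
  have k1 : LipschitzOnWith K (fun s => (γ s).1) (Set.Icc 0 T) := by
    simpa [Function.comp_def] using LipschitzWith.prod_fst.comp_lipschitzOnWith hK
  have k' : LipschitzOnWith K (fun s => (γ s).2) (Set.Icc 0 T) := by
    simpa [Function.comp_def] using LipschitzWith.prod_snd.comp_lipschitzOnWith hK
  have k2 : LipschitzOnWith K (fun s => (γ s).2.1) (Set.Icc 0 T) := by
    simpa [Function.comp_def] using LipschitzWith.prod_fst.comp_lipschitzOnWith k'
  have k3 : LipschitzOnWith K (fun s => (γ s).2.2) (Set.Icc 0 T) := by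
    simpa [Function.comp_def] using LipschitzWith.prod_snd.comp_lipschitzOnWith k'
  have bx : ∀ t, 0 ≤ t → t ≤ T → |(γ t).1 - p.1| ≤ t := by
    intro t h0 ht
    have := lip_bound (M := 1) h0 (k1.mono (Set.Icc_subset_Icc_right ht)) (by
      filter_upwards [ae_restrict_of_ae_restrict_of_subset (Set.Ioo_subset_Ioo_right ht) hγ]
        with s hs using ⟨_, hs.1, la s⟩)
    simpa [hγ0] using this
  refine ⟨by simpa [hγS] using bx T hT.le le_rfl, ?_, ?_⟩
  · have := lip_bound (M := 1) hT.le k2 (by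
      filter_upwards [hγ] with s hs using ⟨_, hs.2.1, lb s⟩)
    simpa [hγ0, hγS] using this
  · have k4 := k3.sub ((LipschitzWith.lipschitzOnWith (s := Set.univ)
      (lipschitzWith_smul (|p.1| ^ α))).comp k2 (Set.mapsTo_univ _ _))
    have := lip_bound (M := α * (|p.1| + T) ^ (α - 1) * T) hT.le k4 (by
      rw [ae_restrict_iff' measurableSet_Ioo] at hγ ⊢
      filter_upwards [hγ] with s hs hsT
      obtain ⟨-, d2, d3⟩ := hs hsT
      refine ⟨_, d3.sub (d2.const_smul (|p.1| ^ α)), ?_⟩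
      have hb1 := bx s hsT.1.le hsT.2.le
      have hb2 : |(|(γ s).1| - |p.1|)| ≤ T :=
        (abs_abs_sub_abs_le_abs_sub _ _).trans (hb1.trans hsT.2.le)
      have hl := rpow_lip (a := |(γ s).1|) (b := |p.1|) (R := |p.1| + T) hα (abs_nonneg _)
        (abs_nonneg _) (by linarith [(abs_le.1 hb2).2]) (by linarith)
      rw [smul_eq_mul, ← sub_mul, abs_mul]
      have hR : 0 ≤ α * (|p.1| + T) ^ (α - 1) := by positivity
      calc _ ≤ α * (|p.1| + T) ^ (α - 1) * T * 1 :=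
            mul_le_mul (hl.trans (mul_le_mul_of_nonneg_left hb2 hR)) (lb s) (abs_nonneg _)
              (by positivity)
        _ = _ := mul_one _)
    simp only [Pi.sub_apply, Function.comp_apply, smul_eq_mul, hγ0, hγS] at this
    convert this using 2
    ring

/-- sheared box -/
def sbox (p : ℝ × ℝ × ℝ) (k a b : ℝ) : Set (ℝ × ℝ × ℝ) :=
  {q | |q.1 - p.1| ≤ a ∧ |q.2.1 - p.2.1| ≤ a ∧ |q.2.2 - p.2.2 - k * (q.2.1 - p.2.1)| ≤ b}

lemma volume_sbox (p : ℝ × ℝ × ℝ) (k a b : ℝ) (ha : 0 ≤ a) :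
    volume (sbox p k a b) = ENNReal.ofReal (8 * a ^ 2 * b) := by
  have mp : MeasurePreserving (fun u : ℝ × ℝ => (u.1, u.2 - k * (u.1 - p.2.1)))
      (volume : Measure (ℝ × ℝ)) (volume : Measure (ℝ × ℝ)) := by
    refine MeasurePreserving.skew_product (MeasurePreserving.id volume)
      (g := fun y z => z - k * (y - p.2.1)) ?_ ?_
    · unfold Function.uncurry; fun_prop
    · exact Filter.Eventually.of_forall fun y =>
        (measurePreserving_sub_right volume (k * (y - p.2.1))).map_eq
  have e : sbox p k a b = Set.Icc (p.1 - a) (p.1 + a) ×ˢ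
      ((fun u : ℝ × ℝ => (u.1, u.2 - k * (u.1 - p.2.1))) ⁻¹'
        (Set.Icc (p.2.1 - a) (p.2.1 + a) ×ˢ Set.Icc (p.2.2 - b) (p.2.2 + b))) := by
    ext ⟨x, y, z⟩
    simp only [sbox, Set.mem_setOf_eq, Set.mem_prod, Set.mem_preimage, Set.mem_Icc, abs_le]
    constructor
    · rintro ⟨⟨_, _⟩, ⟨_, _⟩, _, _⟩
      refine ⟨⟨?_, ?_⟩, ⟨?_, ?_⟩, ?_, ?_⟩ <;> linarith
    · rintro ⟨⟨_, _⟩, ⟨_, _⟩, _, _⟩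
      refine ⟨⟨?_, ?_⟩, ⟨?_, ?_⟩, ?_, ?_⟩ <;> linarith
  rw [e, Measure.volume_eq_prod, Measure.prod_prod, mp.measure_preimage
    (measurableSet_Icc.prod measurableSet_Icc).nullMeasurableSet, Measure.volume_eq_prod,
    Measure.prod_prod, Real.volume_Icc, Real.volume_Icc, Real.volume_Icc,
    ← ENNReal.ofReal_mul (by linarith), ← ENNReal.ofReal_mul (by linarith)]
  congr 1
  ring

lemma ball_upper (α : ℝ) (hα : 1 ≤ α) (p : ℝ × ℝ × ℝ) (r : ℝ) (hr : 0 < r) :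
    volume (ccBall α p r) ≤ ENNReal.ofReal (8 * α * r ^ 4 * (|p.1| + r) ^ (α - 1)) := by
  have hs : ccBall α p r ⊆ sbox p (|p.1| ^ α) r (α * (|p.1| + r) ^ (α - 1) * r * r) := by
    intro q hq
    obtain ⟨T, hTr, hT⟩ := (mem_ccBall_iff α hα p q r).1 hq
    have hT0 := hT.1
    obtain ⟨h1, h2, h3⟩ := hT.bound hα
    refine ⟨h1.trans hTr.le, h2.trans hTr.le, h3.trans ?_⟩
    have : (|p.1| + T) ^ (α - 1) ≤ (|p.1| + r) ^ (α - 1) :=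
      Real.rpow_le_rpow (by positivity) (by linarith) (by linarith)
    gcongr
  refine (measure_mono hs).trans (le_of_eq ?_)
  rw [volume_sbox _ _ _ _ hr.le]
  congr 1
  ring

lemma ball_lower (α : ℝ) (hα : 1 ≤ α) (p : ℝ × ℝ × ℝ) (r : ℝ) (hr : 0 < r) :
    ENNReal.ofReal (8 / 9 ^ 4 * r ^ 4 * (|p.1| + r / 9) ^ (α - 1)) ≤ volume (ccBall α p r) := by
  obtain ⟨τ, hτ⟩ : ∃ τ, τ = r / 9 := ⟨_, rfl⟩
  have hτ0 : 0 < τ := by rw [hτ]; positivity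
  have hg := rpow_gap (a := |p.1| + τ) (τ := τ) hα (by positivity) hτ0
  rw [show |p.1| + τ + τ = |p.1| + 2 * τ by ring] at hg
  have hs : sbox p ((|p.1| + τ) ^ α) τ (τ * (|p.1| + τ) ^ (α - 1) * τ) ⊆ ccBall α p r := by
    rintro ⟨x', y', z'⟩ ⟨h1, h2, h3⟩
    obtain ⟨x, y, z⟩ := p
    simp only at h1 h2 h3 hg
    rw [mem_ccBall_iff α hα]
    set A := (|x| + τ) ^ α with hA
    set B := (|x| + 2 * τ) ^ α with hB
    have hAB : 0 < B - A := lt_of_lt_of_le (by positivity) hg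
    set v := (z' - z - A * (y' - y)) / (B - A) with hv
    have hv' : (B - A) * v = z' - z - A * (y' - y) := by rw [hv]; field_simp
    have hvτ : |v| ≤ τ := by
      rw [hv, abs_div, abs_of_pos hAB, div_le_iff₀ hAB]
      refine h3.trans ?_
      nlinarith
    have hu : |y' - y - v| ≤ 2 * τ := by
      have := abs_sub (y' - y) v
      linarith
    have := Reach.path (α := α) (τ := τ) (x := x) (y := y) (z := z) (x' := x') (u := y' - y - v)
      (v := v) (M := 2 * τ) (N := τ) hτ0 (by positivity) hτ0 hu hvτ
    rw [← hA, ← hB, show y + (y' - y - v) + v = y' by ring,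
      show z + A * (y' - y - v) + B * v = z' by linear_combination hv'] at this
    exact ⟨_, by linarith, this⟩
  refine le_trans (le_of_eq ?_) (measure_mono hs)
  rw [volume_sbox _ _ _ _ hτ0.le, ← hτ]
  congr 1
  rw [show r = 9 * τ by linarith]
  ring

/-- Volume estimates for CC balls: `ℒ³(B(p,r)) ≃ r⁴ |x|^{α-1}` when `|x| ≥ η r`, and
`ℒ³(B(p,r)) ≃ r^{α+3}` when `|x| ≤ η r`. -/
theorem volume_ccBall (α : ℝ) (hα : 1 ≤ α) :
    ∀ η : ℝ, 0 < η → ∃ c C : ℝ, 0 < c ∧ 0 < C ∧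
      ∀ p : ℝ × ℝ × ℝ, ∀ r : ℝ, 0 < r →
        (η * r ≤ |p.1| →
          ENNReal.ofReal (c * r ^ 4 * |p.1| ^ (α - 1)) ≤ volume (ccBall α p r) ∧
          volume (ccBall α p r) ≤ ENNReal.ofReal (C * r ^ 4 * |p.1| ^ (α - 1))) ∧
        (|p.1| ≤ η * r →
          ENNReal.ofReal (c * r ^ (α + 3)) ≤ volume (ccBall α p r) ∧
          volume (ccBall α p r) ≤ ENNReal.ofReal (C * r ^ (α + 3))) := by
  intro η hη
  have e4 : ∀ r : ℝ, 0 < r → r ^ (α + 3) = r ^ 4 * r ^ (α - 1) := fun r hr => by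
    rw [← Real.rpow_natCast r 4, ← Real.rpow_add hr]
    congr 1
    push_cast
    ring
  have hn : (0 : ℝ) < (1 / 9) ^ (α - 1) := by positivity
  have hn1 : (1 / 9 : ℝ) ^ (α - 1) ≤ 1 :=
    Real.rpow_le_one (by norm_num) (by norm_num) (by linarith)
  set C1 : ℝ := (1 + 1 / η) ^ (α - 1) with hC1
  set C2 : ℝ := (η + 1) ^ (α - 1) with hC2
  have p1 : 0 < C1 := by positivity
  have p2 : 0 < C2 := by positivity
  have hα0 : 0 < α := by linarith
  refine ⟨8 / 9 ^ 4 * (1 / 9) ^ (α - 1), 8 * α * (C1 + C2), by positivity, by positivity, ?_⟩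
  intro p r hr
  have hx := abs_nonneg p.1
  have hl := ball_lower α hα p r hr
  have hu := ball_upper α hα p r hr
  refine ⟨fun h => ⟨le_trans (ENNReal.ofReal_le_ofReal ?_) hl,
    hu.trans (ENNReal.ofReal_le_ofReal ?_)⟩, fun h => ⟨le_trans (ENNReal.ofReal_le_ofReal ?_) hl,
    hu.trans (ENNReal.ofReal_le_ofReal ?_)⟩⟩
  · have q1 : |p.1| ^ (α - 1) ≤ (|p.1| + r / 9) ^ (α - 1) :=
      Real.rpow_le_rpow hx (by linarith) (by linarith)
    have q0 : 0 ≤ |p.1| ^ (α - 1) := by positivity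
    calc _ = 8 / 9 ^ 4 * r ^ 4 * ((1 / 9) ^ (α - 1) * |p.1| ^ (α - 1)) := by ring
      _ ≤ _ := mul_le_mul_of_nonneg_left (by nlinarith) (by positivity)
  · have q1 : (|p.1| + r) ^ (α - 1) ≤ C1 * |p.1| ^ (α - 1) := by
      rw [hC1, ← Real.mul_rpow (by positivity) hx]
      refine Real.rpow_le_rpow (by positivity) ?_ (by linarith)
      have : r ≤ |p.1| / η := by rw [le_div_iff₀ hη]; linarith
      calc _ ≤ |p.1| + |p.1| / η := by linarith
        _ = _ := by ring
    have q0 : 0 ≤ |p.1| ^ (α - 1) := by positivity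
    calc _ ≤ 8 * α * r ^ 4 * ((C1 + C2) * |p.1| ^ (α - 1)) :=
          mul_le_mul_of_nonneg_left (by nlinarith) (by positivity)
      _ = _ := by ring
  · rw [e4 r hr]
    have q1 : (1 / 9) ^ (α - 1) * r ^ (α - 1) ≤ (|p.1| + r / 9) ^ (α - 1) := by
      rw [← Real.mul_rpow (by norm_num) hr.le]
      exact Real.rpow_le_rpow (by positivity) (by linarith) (by linarith)
    calc _ = 8 / 9 ^ 4 * r ^ 4 * ((1 / 9) ^ (α - 1) * r ^ (α - 1)) := by ring
      _ ≤ _ := mul_le_mul_of_nonneg_left q1 (by positivity)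
  · rw [e4 r hr]
    have q1 : (|p.1| + r) ^ (α - 1) ≤ C2 * r ^ (α - 1) := by
      rw [hC2, ← Real.mul_rpow (by positivity) hr.le]
      exact Real.rpow_le_rpow (by positivity) (by linarith) (by linarith)
    have q0 : 0 ≤ r ^ (α - 1) := by positivity
    calc _ ≤ 8 * α * r ^ 4 * ((C1 + C2) * r ^ (α - 1)) :=
          mul_le_mul_of_nonneg_left (by nlinarith) (by positivity)
      _ = _ := by ring
end

section
/- Let α ≥ 1 and let d be the Carnot–Carathéodory distance on ℝ³ induced by X₁ and X₂. There exists a constant C_α > 0 such that for every point p = (x̄, ȳ, 0) in the plane Σ = {z = 0} and every r > 0 one has C_α⁻¹ · ℒ³(B(p,r))/r ≤ μ(B(p,r) ∩ Σ) ≤ C_α · ℒ³(B(p,r))/r, where ℒ³ is Lebesgue measure on ℝ³ and μ(B(p,r) ∩ Σ) denotes the μ-measure of {(x,y) ∈ ℝ² : (x,y,0) ∈ B(p,r)}. -/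
open MeasureTheory

/-- A Lipschitz function with a.e. derivative bounded by `C` grows at most linearly. -/
lemma lip_growth {T : ℝ} {f : ℝ → ℝ} {K : NNReal} (hf : LipschitzOnWith K f (Set.Icc 0 T))
    {C : ℝ} (hC : ∀ᵐ t, t ∈ Set.Ioo 0 T → ∃ d, HasDerivAt f d t ∧ |d| ≤ C)
    {s : ℝ} (hs : s ∈ Set.Icc 0 T) : |f s - f 0| ≤ C * s := by
  have h1 : LipschitzOnWith K f (Set.uIcc 0 s) := by
    rw [Set.uIcc_of_le hs.1]
    exact hf.mono (Set.Icc_subset_Icc_right hs.2)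
  rw [← h1.absolutelyContinuousOnInterval.integral_deriv_eq_sub]
  have hne : ∀ᵐ t : ℝ, t ≠ T := by simp [ae_iff]
  have := intervalIntegral.norm_integral_le_of_norm_le_const_ae (a := 0) (b := s) (C := C)
    (f := deriv f) (by
      filter_upwards [hC, hne] with t ht hne hts
      rw [Set.uIoc_of_le hs.1] at hts
      obtain ⟨d, hd, hd'⟩ := ht ⟨hts.1, lt_of_le_of_ne (hts.2.trans hs.2) hne⟩
      rw [hd.deriv]
      exact hd')
  simpa [abs_of_nonneg hs.1] using this

lemma rpow_diff_le {α : ℝ} (hα : 1 ≤ α) {M u v : ℝ} (hu : 0 ≤ u) (hv : 0 ≤ v) (huM : u ≤ M)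
    (hvM : v ≤ M) : |u ^ α - v ^ α| ≤ α * M ^ (α - 1) * |u - v| := by
  have := Convex.norm_image_sub_le_of_norm_hasDerivWithin_le (f := fun x : ℝ => x ^ α)
    (f' := fun x => α * x ^ (α - 1)) (s := Set.Icc 0 M) (x := v) (y := u) (C := α * M ^ (α - 1))
    (fun x hx => (Real.hasDerivAt_rpow_const (Or.inr hα)).hasDerivWithinAt)
    (fun x hx => by
      rw [Real.norm_eq_abs, abs_of_nonneg (mul_nonneg (by linarith) (Real.rpow_nonneg hx.1 _))]
      exact mul_le_mul_of_nonneg_left (Real.rpow_le_rpow hx.1 hx.2 (by linarith)) (by linarith))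
    (convex_Icc 0 M) ⟨hv, hvM⟩ ⟨hu, huM⟩
  simpa using this

lemma horiz_bound {α T : ℝ} (hα : 1 ≤ α) (hT : 0 ≤ T) {γ : ℝ → ℝ × ℝ × ℝ}
    (hγ : IsHorizontal α T γ) :
    |(γ T).1 - (γ 0).1| ≤ T ∧ |(γ T).2.1 - (γ 0).2.1| ≤ T ∧
    |(γ T).2.2 - (γ 0).2.2 - |(γ 0).1| ^ α * ((γ T).2.1 - (γ 0).2.1)|
      ≤ α * (|(γ 0).1| + T) ^ (α - 1) * T * T := by
  obtain ⟨⟨K, hK⟩, h₁, h₂, -, -, hh, hae⟩ := hγ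
  rw [ae_restrict_iff' measurableSet_Ioo] at hae
  have hb1 : ∀ t, |h₁ t| ≤ 1 := fun t => abs_le_one_iff_mul_self_le_one.2 (by nlinarith [hh t, sq_nonneg (h₂ t)])
  have hb2 : ∀ t, |h₂ t| ≤ 1 := fun t => abs_le_one_iff_mul_self_le_one.2 (by nlinarith [hh t, sq_nonneg (h₁ t)])
  have L1 : LipschitzOnWith (1 * K) (fun s => (γ s).1) (Set.Icc 0 T) :=
    LipschitzWith.prod_fst.comp_lipschitzOnWith hK
  have L' : LipschitzOnWith (1 * K) (fun s => (γ s).2) (Set.Icc 0 T) :=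
    LipschitzWith.prod_snd.comp_lipschitzOnWith hK
  have L2 : LipschitzOnWith (1 * (1 * K)) (fun s => (γ s).2.1) (Set.Icc 0 T) :=
    LipschitzWith.prod_fst.comp_lipschitzOnWith L'
  have L3 : LipschitzOnWith (1 * (1 * K)) (fun s => (γ s).2.2) (Set.Icc 0 T) :=
    LipschitzWith.prod_snd.comp_lipschitzOnWith L'
  have hx : ∀ s ∈ Set.Icc 0 T, |(γ s).1 - (γ 0).1| ≤ 1 * s := fun s hs =>
    lip_growth L1 (C := 1) (by
      filter_upwards [hae] with t ht hts
      exact ⟨_, (ht hts).1, hb1 t⟩) hs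
  have hTm : T ∈ Set.Icc 0 T := ⟨hT, le_rfl⟩
  refine ⟨by simpa using hx T hTm, ?_, ?_⟩
  · have := lip_growth L2 (C := 1) (by
      filter_upwards [hae] with t ht hts
      exact ⟨_, (ht hts).2.1, hb2 t⟩) hTm
    simpa using this
  · set a := |(γ 0).1| with ha
    have L4 : LipschitzOnWith (1 * (1 * K) + ‖a ^ α‖₊ * (1 * (1 * K)))
        (fun s => (γ s).2.2 - a ^ α * (γ s).2.1) (Set.Icc 0 T) := by
      apply LipschitzOnWith.of_dist_le_mul
      intro s hs t ht
      have e1 := L3.dist_le_mul s hs t ht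
      have e2 := L2.dist_le_mul s hs t ht
      rw [Real.dist_eq] at e1 e2
      rw [Real.dist_eq]
      have : (γ s).2.2 - a ^ α * (γ s).2.1 - ((γ t).2.2 - a ^ α * (γ t).2.1) =
        ((γ s).2.2 - (γ t).2.2) - a ^ α * ((γ s).2.1 - (γ t).2.1) := by ring
      rw [this]
      refine (abs_sub _ _).trans ?_
      rw [abs_mul]
      have e3 := mul_le_mul_of_nonneg_left e2 (abs_nonneg (a ^ α))
      push_cast at e1 e3 ⊢
      rw [Real.norm_eq_abs]
      linarith
    have := lip_growth L4 (C := α * (a + T) ^ (α - 1) * T) (by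
      filter_upwards [hae] with t ht hts
      refine ⟨_, (ht hts).2.2.sub ((ht hts).2.1.const_mul (a ^ α)), ?_⟩
      have hxt := hx t ⟨hts.1.le, hts.2.le⟩
      have htT := hts.2
      rw [← sub_mul, abs_mul]
      have h3 := abs_abs_sub_abs_le (γ t).1 (γ 0).1
      have h4 := (abs_le.1 h3).2
      have h5 : |(γ t).1| ≤ a + T := by linarith
      have h6 := rpow_diff_le hα (abs_nonneg (γ t).1) (abs_nonneg (γ 0).1) h5 (by linarith)
      have h7 : 0 ≤ α * (a + T) ^ (α - 1) :=
        mul_nonneg (by linarith) (Real.rpow_nonneg (by positivity) _)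
      calc _ ≤ |(|(γ t).1| ^ α - a ^ α)| * 1 := by gcongr; exact hb2 t
        _ ≤ α * (a + T) ^ (α - 1) * |(|(γ t).1| - |(γ 0).1|)| := by rw [mul_one]; exact h6
        _ ≤ _ := by gcongr; linarith) hTm
    have e : (γ T).2.2 - (γ 0).2.2 - a ^ α * ((γ T).2.1 - (γ 0).2.1) =
      (γ T).2.2 - a ^ α * (γ T).2.1 - ((γ 0).2.2 - a ^ α * (γ 0).2.1) := by ring
    rw [e]
    exact this

/-- `q` can be reached from `p` in time `T ≥ 0`. -/
def CReach (α T : ℝ) (p q : ℝ × ℝ × ℝ) : Prop :=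
  0 ≤ T ∧ ∃ γ : ℝ → ℝ × ℝ × ℝ, IsHorizontal α T γ ∧ γ 0 = p ∧ γ T = q

lemma CReach.trans {α S T : ℝ} {p q w : ℝ × ℝ × ℝ} (h : CReach α S p q) (h' : CReach α T q w) :
    CReach α (S + T) p w := by
  obtain ⟨hS, γ, ⟨⟨K, hK⟩, h₁, h₂, m1, m2, hh, hae⟩, g0, gS⟩ := h
  obtain ⟨hT, γ', ⟨⟨K', hK'⟩, h₁', h₂', m1', m2', hh', hae'⟩, g0', gT'⟩ := h'
  rw [ae_restrict_iff' measurableSet_Ioo] at hae hae'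
  set g : ℝ → ℝ × ℝ × ℝ := fun t => if t ≤ S then γ t else γ' (t - S) with hg
  have gl : ∀ t, t ≤ S → g t = γ t := fun t ht => by simp [hg, ht]
  have gr : ∀ t, S ≤ t → g t = γ' (t - S) := fun t ht => by
    rcases ht.eq_or_lt with rfl | ht
    · simp [hg, gS, g0']
    · simp [hg, not_le.2 ht]
  refine ⟨by linarith, g, ⟨⟨K + K', ?_⟩, fun t => if t ≤ S then h₁ t else h₁' (t - S),
    fun t => if t ≤ S then h₂ t else h₂' (t - S), ?_, ?_, ?_, ?_⟩, ?_, ?_⟩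
  · have key : ∀ s ∈ Set.Icc 0 (S + T), ∀ t ∈ Set.Icc 0 (S + T), s ≤ t →
        dist (g s) (g t) ≤ (K + K') * dist s t := by
      intro s hs t ht hst
      have hd : dist s t = t - s := by rw [dist_comm, Real.dist_eq, abs_of_nonneg (by linarith)]
      rcases le_total t S with h1 | h1
      · rw [gl s (hst.trans h1), gl t h1]
        have := hK.dist_le_mul s ⟨hs.1, hst.trans h1⟩ t ⟨ht.1, h1⟩
        have h2 : 0 ≤ (K' : ℝ) * dist s t := by positivity
        linarith
      · rcases le_total s S with h2 | h2
        · have e1 := hK.dist_le_mul s ⟨hs.1, h2⟩ S ⟨hS, le_rfl⟩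
          have e2 := hK'.dist_le_mul 0 ⟨le_rfl, hT⟩ (t - S) ⟨by linarith, by linarith [ht.2]⟩
          rw [gl s h2, gr t h1]
          have e3 := dist_triangle (γ s) (γ S) (γ' (t - S))
          rw [gS, ← g0'] at e3
          have d1 : dist s S = S - s := by rw [dist_comm, Real.dist_eq, abs_of_nonneg (by linarith)]
          have d2 : dist 0 (t - S) = t - S := by
            rw [dist_comm, Real.dist_eq, abs_of_nonneg (by linarith)]; ring
          rw [d1] at e1
          rw [d2] at e2
          rw [hd]
          rw [gS, ← g0'] at e1
          have p1 : 0 ≤ (K : ℝ) * (t - S) := mul_nonneg K.2 (by linarith)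
          have p2 : 0 ≤ (K' : ℝ) * (S - s) := mul_nonneg K'.2 (by linarith)
          nlinarith
        · rw [gr s h2, gr t h1]
          have := hK'.dist_le_mul (s - S) ⟨by linarith, by linarith [hs.2]⟩ (t - S)
            ⟨by linarith, by linarith [ht.2]⟩
          rw [dist_sub_right] at this
          have h2 : 0 ≤ (K : ℝ) * dist s t := by positivity
          linarith
    apply LipschitzOnWith.of_dist_le_mul
    intro s hs t ht
    push_cast
    rcases le_total s t with h | h
    · exact key s hs t ht h
    · rw [dist_comm (g s), dist_comm s]
      exact key t ht s hs h
  · exact Measurable.ite measurableSet_Iic m1 (m1'.comp (measurable_id.sub_const S))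
  · exact Measurable.ite measurableSet_Iic m2 (m2'.comp (measurable_id.sub_const S))
  · intro t
    by_cases h : t ≤ S
    · simpa [h] using hh t
    · simpa [h] using hh' (t - S)
  · rw [ae_restrict_iff' measurableSet_Ioo]
    have hne : ∀ᵐ t : ℝ, t ≠ S := by simp [ae_iff]
    have hshift := (measurePreserving_sub_right volume S).quasiMeasurePreserving.ae hae'
    filter_upwards [hae, hshift, hne] with t h1 h2 hne ht
    rcases lt_or_gt_of_ne hne with h | h
    · have ev : g =ᶠ[nhds t] γ := by
        filter_upwards [Iio_mem_nhds h] with s hs using gl s (le_of_lt hs)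
      obtain ⟨a, b, c⟩ := h1 ⟨ht.1, h⟩
      simp only [h.le, if_true]
      rw [gl t h.le]
      exact ⟨a.congr_of_eventuallyEq (ev.fun_comp _), b.congr_of_eventuallyEq
        (ev.fun_comp (fun u => u.2.1)), c.congr_of_eventuallyEq (ev.fun_comp (fun u => u.2.2))⟩
    · have ev : g =ᶠ[nhds t] fun s => γ' (s - S) := by
        filter_upwards [Ioi_mem_nhds h] with s hs using gr s (le_of_lt hs)
      obtain ⟨a, b, c⟩ := h2 ⟨by linarith, by linarith [ht.2]⟩
      simp only [not_le.2 h, if_false]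
      rw [gr t h.le]
      exact ⟨(a.comp_sub_const t S).congr_of_eventuallyEq (ev.fun_comp _),
        (b.comp_sub_const t S).congr_of_eventuallyEq (ev.fun_comp (fun u => u.2.1)),
        (c.comp_sub_const t S).congr_of_eventuallyEq (ev.fun_comp (fun u => u.2.2))⟩
  · rw [gl 0 hS, g0]
  · rw [gr _ (by linarith)]
    simpa using gT'

lemma CReach.seg {α T a b : ℝ} (hT : 0 ≤ T) (hab : a ^ 2 + b ^ 2 ≤ 1) (h0 : a = 0 ∨ b = 0)
    (x y z : ℝ) : CReach α T (x, y, z) (x + a * T, y + b * T, z + |x| ^ α * b * T) := by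
  have d : ∀ u v t : ℝ, HasDerivAt (fun s => u + v * s) v t := fun u v t => by
    simpa using ((hasDerivAt_id t).const_mul v).const_add u
  have l : ∀ u v : ℝ, LipschitzWith ‖v‖₊ (fun s : ℝ => u + v * s) := fun u v => by
    apply LipschitzWith.of_dist_le_mul
    intro s t
    rw [Real.dist_eq, Real.dist_eq, add_sub_add_left_eq_sub, ← mul_sub, abs_mul]
    simp
  refine ⟨hT, fun t => (x + a * t, y + b * t, z + |x| ^ α * b * t), ⟨⟨_, (((l x a).prodMk ((l y b).prodMk
    (l z (|x| ^ α * b)))).lipschitzOnWith)⟩, fun _ => a, fun _ => b, measurable_const,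
    measurable_const, fun _ => hab, ?_⟩, by simp, rfl⟩
  refine Filter.Eventually.of_forall fun t => ⟨d _ _ _, d _ _ _, ?_⟩
  rcases h0 with rfl | rfl
  · simpa using d z (|x| ^ α * b) t
  · simpa using d z 0 t

lemma CReach.xmove {α : ℝ} (x x' y z : ℝ) : CReach α |x' - x| (x, y, z) (x', y, z) := by
  rcases abs_cases (x' - x) with ⟨h, -⟩ | ⟨h, -⟩
  · have := CReach.seg (α := α) (abs_nonneg (x' - x)) (a := 1) (b := 0) (by norm_num)
      (Or.inr rfl) x y z
    convert this using 2 <;> simp [h]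
  · have := CReach.seg (α := α) (abs_nonneg (x' - x)) (a := -1) (b := 0) (by norm_num)
      (Or.inr rfl) x y z
    convert this using 2 <;> simp [h]

lemma CReach.ymove {α : ℝ} (x y z η : ℝ) :
    CReach α |η| (x, y, z) (x, y + η, z + |x| ^ α * η) := by
  rcases abs_cases η with ⟨h, -⟩ | ⟨h, -⟩
  · have := CReach.seg (α := α) (abs_nonneg η) (a := 0) (b := 1) (by norm_num)
      (Or.inl rfl) x y z
    convert this using 2 <;> simp [h]
  · have := CReach.seg (α := α) (abs_nonneg η) (a := 0) (b := -1) (by norm_num)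
      (Or.inl rfl) x y z
    convert this using 2 <;> simp [h]

/-- the explicit commutator path -/
lemma CReach.path {α : ℝ} (x y x' y' z' h η : ℝ) (hh : 0 ≤ h)
    (hη : ((|x| + h) ^ α - |x| ^ α) * η = z' - |x| ^ α * (y' - y)) :
    CReach α (2 * h + 2 * |η| + |y' - y| + |x' - x|) (x, y, 0) (x', y', z') := by
  obtain ⟨w, hw1, hw2⟩ : ∃ w, |w - x| = h ∧ |w| = |x| + h := by
    rcases le_total 0 x with hx | hx
    · exact ⟨x + h, by simp [abs_of_nonneg hh], by rw [abs_of_nonneg hx, abs_of_nonneg (by linarith)]⟩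
    · exact ⟨x - h, by simp [abs_of_nonneg hh], by
        rw [abs_of_nonpos hx, abs_of_nonpos (by linarith)]; ring⟩
  have s1 := CReach.xmove (α := α) x w y 0
  have s2 := CReach.ymove (α := α) w y 0 η
  have s3 := CReach.xmove (α := α) w x (y + η) (0 + |w| ^ α * η)
  have s4 := CReach.ymove (α := α) x (y + η) (0 + |w| ^ α * η) (-η)
  have s5 := CReach.ymove (α := α) x (y + η + -η) (0 + |w| ^ α * η + |x| ^ α * -η) (y' - y)
  have s6 := CReach.xmove (α := α) x x' (y + η + -η + (y' - y))
    (0 + |w| ^ α * η + |x| ^ α * -η + |x| ^ α * (y' - y))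
  have := ((((s1.trans s2).trans s3).trans s4).trans s5).trans s6
  rw [abs_sub_comm x w, hw1, hw2, abs_neg] at this
  convert this using 1
  · ring
  · refine Prod.ext rfl (Prod.ext ?_ ?_)
    · simp
    · simp only
      linarith

lemma rpow_diff_ge {α : ℝ} (hα : 1 ≤ α) {a h : ℝ} (ha : 0 ≤ a) (hh : 0 < h) :
    h * (a + h) ^ (α - 1) ≤ (a + h) ^ α - a ^ α := by
  have e1 : (a + h) ^ α = (a + h) * (a + h) ^ (α - 1) := by
    rw [← Real.rpow_one_add' (by linarith) (by linarith)]; congr 1; ring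
  have e2 : a ^ α = a * a ^ (α - 1) := by
    rw [← Real.rpow_one_add' (by linarith) (by linarith)]; congr 1; ring
  have e3 : a ^ (α - 1) ≤ (a + h) ^ (α - 1) := Real.rpow_le_rpow ha (by linarith) (by linarith)
  rw [e1, e2]
  nlinarith

lemma ball_outer {α : ℝ} (hα : 1 ≤ α) {xb yb r : ℝ} {q : ℝ × ℝ × ℝ}
    (hq : q ∈ ccBall α (xb, yb, 0) r) :
    |q.1 - xb| < r ∧ |q.2.1 - yb| < r ∧
      |q.2.2 - |xb| ^ α * (q.2.1 - yb)| < α * (|xb| + r) ^ (α - 1) * r * r := by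
  have hne : {T : ℝ | 0 < T ∧ ∃ γ : ℝ → ℝ × ℝ × ℝ, IsHorizontal α T γ ∧ γ 0 = (xb, yb, 0)
      ∧ γ T = q}.Nonempty := by
    have hD := rpow_diff_ge hα (abs_nonneg xb) one_pos
    have hD' : 0 < (|xb| + 1) ^ α - |xb| ^ α := lt_of_lt_of_le (by positivity) hD
    obtain ⟨-, h⟩ := CReach.path (α := α) xb yb q.1 q.2.1 q.2.2 1
      ((q.2.2 - |xb| ^ α * (q.2.1 - yb)) / ((|xb| + 1) ^ α - |xb| ^ α)) zero_le_one
      (by field_simp)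
    exact ⟨_, by positivity, h⟩
  obtain ⟨T, ⟨hT, γ, hγ, g0, gT⟩, hTr⟩ := exists_lt_of_csInf_lt hne hq
  obtain ⟨b1, b2, b3⟩ := horiz_bound hα hT.le hγ
  rw [g0, gT] at b1 b2 b3
  simp only [sub_zero] at b1 b2 b3
  refine ⟨by linarith, by linarith, b3.trans_lt ?_⟩
  have h1 : (|xb| + T) ^ (α - 1) ≤ (|xb| + r) ^ (α - 1) :=
    Real.rpow_le_rpow (by positivity) (by linarith) (by linarith)
  have h2 : 0 < (|xb| + r) ^ (α - 1) := Real.rpow_pos_of_pos (by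
    have := abs_nonneg xb
    linarith) _
  have h3 : T * T < r * r := by nlinarith
  have hα0 : 0 < α := by linarith
  calc _ ≤ α * (|xb| + r) ^ (α - 1) * T * T := by gcongr
    _ = α * (|xb| + r) ^ (α - 1) * (T * T) := by ring
    _ < α * (|xb| + r) ^ (α - 1) * (r * r) := by gcongr
    _ = _ := by ring

lemma ball_inner {α : ℝ} (hα : 1 ≤ α) {xb yb r : ℝ} (hr : 0 < r) {q : ℝ × ℝ × ℝ}
    (h1 : |q.1 - xb| ≤ r / 8) (h2 : |q.2.1 - yb| ≤ r / 8)
    (h3 : |q.2.2 - |xb| ^ α * (q.2.1 - yb)| ≤ (1 / 8) ^ (α + 1) * (|xb| + r) ^ (α - 1) * r * r) :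
    q ∈ ccBall α (xb, yb, 0) r := by
  have hr8 : 0 < r / 8 := by linarith
  have hD := rpow_diff_ge hα (abs_nonneg xb) hr8
  set D := (|xb| + r / 8) ^ α - |xb| ^ α with hDd
  have hD' : 0 < D := lt_of_lt_of_le (by positivity) hD
  have hM : 0 ≤ |xb| + r := by positivity
  have hD2 : r * ((1 / 8) ^ α * (|xb| + r) ^ (α - 1)) ≤ D := by
    refine le_trans ?_ hD
    have e : (1 / 8 : ℝ) ^ α = 1 / 8 * (1 / 8) ^ (α - 1) := by
      rw [← Real.rpow_one_add' (by norm_num) (by linarith)]; congr 1; ring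
    rw [e, mul_assoc, ← Real.mul_rpow (by norm_num) hM]
    have : (1 / 8 * (|xb| + r)) ^ (α - 1) ≤ (|xb| + r / 8) ^ (α - 1) :=
      Real.rpow_le_rpow (by positivity) (by linarith [abs_nonneg xb]) (by linarith)
    nlinarith
  set ζ := q.2.2 - |xb| ^ α * (q.2.1 - yb) with hζ
  have hη : |ζ / D| ≤ r / 8 := by
    rw [abs_div, abs_of_pos hD', div_le_iff₀ hD']
    refine h3.trans ?_
    have e : (1 / 8 : ℝ) ^ (α + 1) = (1 / 8) ^ α * (1 / 8) := by
      rw [Real.rpow_add_one (by norm_num)]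
    rw [e]
    nlinarith
  obtain ⟨-, h⟩ := CReach.path (α := α) xb yb q.1 q.2.1 q.2.2 (r / 8) (ζ / D) hr8.le
      (by rw [← hDd]; field_simp; rw [hζ])
  have hbdd : BddBelow {T : ℝ | 0 < T ∧ ∃ γ : ℝ → ℝ × ℝ × ℝ, IsHorizontal α T γ ∧
      γ 0 = (xb, yb, 0) ∧ γ T = q} := ⟨0, fun t ht => ht.1.le⟩
  refine lt_of_le_of_lt (csInf_le hbdd ⟨?_, h⟩) ?_
  · positivity
  · linarith

/-- Volume of a sheared box. -/
lemma volume_shear (x y k a b A : ℝ) (ha : 0 ≤ a) (hb : 0 ≤ b) (hA : 0 ≤ A) :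
    volume {q : ℝ × ℝ × ℝ | |q.1 - x| < a ∧ |q.2.1 - y| < b ∧ |q.2.2 - k * (q.2.1 - y)| < A} =
      ENNReal.ofReal (8 * a * b * A) := by
  have hset : {q : ℝ × ℝ × ℝ | |q.1 - x| < a ∧ |q.2.1 - y| < b ∧ |q.2.2 - k * (q.2.1 - y)| < A} =
      Set.Ioo (x - a) (x + a) ×ˢ regionBetween (fun t => k * (t - y) - A)
        (fun t => k * (t - y) + A) (Set.Ioo (y - b) (y + b)) := by
    ext ⟨q1, q2, q3⟩
    simp only [Set.mem_setOf_eq, Set.mem_prod, regionBetween, Set.mem_Ioo, abs_lt]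
    constructor
    · rintro ⟨⟨_, _⟩, ⟨_, _⟩, ⟨_, _⟩⟩
      refine ⟨⟨?_, ?_⟩, ⟨?_, ?_⟩, ⟨?_, ?_⟩⟩ <;> linarith
    · rintro ⟨⟨_, _⟩, ⟨_, _⟩, ⟨_, _⟩⟩
      refine ⟨⟨?_, ?_⟩, ⟨?_, ?_⟩, ⟨?_, ?_⟩⟩ <;> linarith
  rw [hset, Measure.volume_eq_prod, Measure.prod_prod, Measure.volume_eq_prod,
    volume_regionBetween_eq_lintegral' (by fun_prop) (by fun_prop) measurableSet_Ioo]
  have : ∀ t : ℝ, ((fun t => k * (t - y) + A) - fun t => k * (t - y) - A) t = 2 * A := by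
    intro t
    simp only [Pi.sub_apply]
    ring
  simp only [this]
  rw [setLIntegral_const, Real.volume_Ioo, Real.volume_Ioo, ← ENNReal.ofReal_mul (by linarith),
    ← ENNReal.ofReal_mul (by linarith)]
  congr 1
  ring

lemma plane_rect_le {α : ℝ} (a b c d m : ℝ) (hm : ∀ x ∈ Set.Ioo a b, |x| ^ α ≤ m)
    (hm0 : 0 ≤ m) (hab : a ≤ b) :
    planeMeasure α (Set.Ioo a b ×ˢ Set.Ioo c d) ≤ ENNReal.ofReal (m * (b - a) * (d - c)) := by
  rw [planeMeasure, withDensity_apply _ (measurableSet_Ioo.prod measurableSet_Ioo)]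
  calc _ ≤ ∫⁻ _ in (Set.Ioo a b ×ˢ Set.Ioo c d : Set (ℝ × ℝ)), ENNReal.ofReal m :=
        setLIntegral_mono' (measurableSet_Ioo.prod measurableSet_Ioo) (fun u hu =>
          ENNReal.ofReal_le_ofReal (hm u.1 hu.1))
    _ = _ := by
      rw [setLIntegral_const, Measure.volume_eq_prod, Measure.prod_prod, Real.volume_Ioo,
        Real.volume_Ioo, ← mul_assoc, ← ENNReal.ofReal_mul hm0,
        ← ENNReal.ofReal_mul (mul_nonneg hm0 (by linarith))]

lemma plane_rect_ge {α : ℝ} (a b c d m : ℝ) (hm : ∀ x ∈ Set.Ioo a b, m ≤ |x| ^ α)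
    (hm0 : 0 ≤ m) (hab : a ≤ b) :
    ENNReal.ofReal (m * (b - a) * (d - c)) ≤ planeMeasure α (Set.Ioo a b ×ˢ Set.Ioo c d) := by
  rw [planeMeasure, withDensity_apply _ (measurableSet_Ioo.prod measurableSet_Ioo)]
  calc
    _ = ∫⁻ _ in (Set.Ioo a b ×ˢ Set.Ioo c d : Set (ℝ × ℝ)), ENNReal.ofReal m := by
      rw [setLIntegral_const, Measure.volume_eq_prod, Measure.prod_prod, Real.volume_Ioo,
        Real.volume_Ioo, ← mul_assoc, ← ENNReal.ofReal_mul hm0,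
        ← ENNReal.ofReal_mul (mul_nonneg hm0 (by linarith))]
    _ ≤ _ := setLIntegral_mono' (measurableSet_Ioo.prod measurableSet_Ioo) (fun u hu =>
          ENNReal.ofReal_le_ofReal (hm u.1 hu.1))

lemma vol_upper {α : ℝ} (hα : 1 ≤ α) {xb yb r : ℝ} (hr : 0 < r) :
    volume (ccBall α (xb, yb, 0) r) ≤
      ENNReal.ofReal (8 * α * (r ^ 3 * (|xb| + r) ^ (α - 1)) * r) := by
  have hsub : ccBall α (xb, yb, 0) r ⊆ {q : ℝ × ℝ × ℝ | |q.1 - xb| < r ∧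
      |q.2.1 - yb| < r ∧ |q.2.2 - |xb| ^ α * (q.2.1 - yb)| <
        α * (|xb| + r) ^ (α - 1) * r * r} := fun q hq => ball_outer hα hq
  refine (measure_mono hsub).trans ?_
  rw [volume_shear _ _ _ _ _ _ hr.le hr.le (by positivity)]
  apply ENNReal.ofReal_le_ofReal
  apply le_of_eq
  ring

lemma vol_lower {α : ℝ} (hα : 1 ≤ α) {xb yb r : ℝ} (hr : 0 < r) :
    ENNReal.ofReal (1 / 8 * (1 / 8) ^ (α + 1) * (r ^ 3 * (|xb| + r) ^ (α - 1)) * r) ≤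
      volume (ccBall α (xb, yb, 0) r) := by
  refine le_trans ?_ (measure_mono (fun q (hq : q ∈ {q : ℝ × ℝ × ℝ | |q.1 - xb| < r / 8 ∧
    |q.2.1 - yb| < r / 8 ∧ |q.2.2 - |xb| ^ α * (q.2.1 - yb)| <
      (1 / 8) ^ (α + 1) * (|xb| + r) ^ (α - 1) * r * r}) =>
    ball_inner hα hr hq.1.le hq.2.1.le hq.2.2.le))
  rw [volume_shear _ _ _ _ _ _ (by positivity) (by positivity) (by positivity)]
  apply ENNReal.ofReal_le_ofReal
  apply le_of_eq
  ring

lemma plane_upper {α : ℝ} (hα : 1 ≤ α) {xb yb r : ℝ} (hr : 0 < r) :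
    planeMeasure α {v : ℝ × ℝ | (v.1, v.2, (0 : ℝ)) ∈ ccBall α (xb, yb, 0) r} ≤
      ENNReal.ofReal (4 * (α * 2 ^ α + 2) * (r ^ 3 * (|xb| + r) ^ (α - 1))) := by
  set M := |xb| + r with hM
  have hM0 : 0 < M := by positivity
  have hMα : M ^ α = M * M ^ (α - 1) := by
    rw [← Real.rpow_one_add' hM0.le (by linarith)]; congr 1; ring
  set b := (α * 2 ^ α + 2) * (r * r / M) with hb
  have hsub : {v : ℝ × ℝ | (v.1, v.2, (0 : ℝ)) ∈ ccBall α (xb, yb, 0) r} ⊆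
      Set.Ioo (xb - r) (xb + r) ×ˢ Set.Ioo (yb - b) (yb + b) := by
    intro v hv
    obtain ⟨h1, h2, h3⟩ := ball_outer hα hv
    simp only [zero_sub, abs_neg] at h1 h2 h3
    rw [← hM] at h3
    have hy : |v.2 - yb| < b := by
      have e0 : 0 < α * 2 ^ α := by positivity
      have e00 : 0 < r * r / M := by positivity
      rcases le_total r |xb| with hx | hx
      · have hx0 : 0 < |xb| := by linarith
        have e1 : M ^ α ≤ 2 ^ α * |xb| ^ α := by
          rw [← Real.mul_rpow (by norm_num) hx0.le]
          exact Real.rpow_le_rpow hM0.le (by linarith) (by linarith)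
        rw [abs_mul, abs_of_nonneg (Real.rpow_nonneg hx0.le _)] at h3
        have e2 : M * M ^ (α - 1) * |v.2 - yb| < 2 ^ α * (α * M ^ (α - 1) * r * r) := by
          rw [← hMα]
          calc _ ≤ 2 ^ α * |xb| ^ α * |v.2 - yb| := by gcongr
            _ = 2 ^ α * (|xb| ^ α * |v.2 - yb|) := by ring
            _ < _ := by gcongr
        have e3 : M * |v.2 - yb| < 2 ^ α * α * r * r := by
          have : 0 < M ^ (α - 1) := by positivity
          nlinarith
        have e4 : |v.2 - yb| < (α * 2 ^ α) * (r * r / M) := by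
          rw [← mul_div_assoc, lt_div_iff₀ hM0]
          linarith
        rw [hb]
        linarith
      · have : r ≤ 2 * (r * r / M) := by
          rw [← mul_div_assoc, le_div_iff₀ hM0]
          nlinarith
        rw [hb]
        nlinarith
    have h1' := abs_lt.1 h1
    have hy' := abs_lt.1 hy
    refine ⟨⟨by linarith, by linarith⟩, ⟨by linarith, by linarith⟩⟩
  refine (measure_mono hsub).trans ((plane_rect_le _ _ _ _ (M ^ α) ?_ (by positivity)
    (by linarith)).trans (ENNReal.ofReal_le_ofReal (le_of_eq ?_)))
  · intro x hx
    refine Real.rpow_le_rpow (abs_nonneg _) ?_ (by linarith)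
    have h1 : |x - xb| ≤ r := abs_le.2 ⟨by linarith [hx.1], by linarith [hx.2]⟩
    have := abs_add_le (x - xb) xb
    rw [sub_add_cancel] at this
    linarith
  · rw [hMα, hb]
    field_simp
    ring

lemma plane_lower {α : ℝ} (hα : 1 ≤ α) {xb yb r : ℝ} (hr : 0 < r) :
    ENNReal.ofReal ((1 / 16) ^ α * (1 / 8) * (1 / 8) ^ (α + 1) *
        (r ^ 3 * (|xb| + r) ^ (α - 1))) ≤
    planeMeasure α {v : ℝ × ℝ | (v.1, v.2, (0 : ℝ)) ∈ ccBall α (xb, yb, 0) r} := by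
  set M := |xb| + r with hM
  have hM0 : 0 < M := by positivity
  have hMα : M ^ α = M * M ^ (α - 1) := by
    rw [← Real.rpow_one_add' hM0.le (by linarith)]; congr 1; ring
  set c : ℝ := (1 / 8) ^ (α + 1) with hc
  have hc0 : 0 < c := by positivity
  have hc8 : c ≤ 1 / 8 := by
    have := Real.rpow_le_rpow_of_exponent_ge (x := 1 / 8) (by norm_num) (by norm_num)
      (show (1 : ℝ) ≤ α + 1 by linarith)
    rwa [Real.rpow_one] at this
  set b := c * (r * r / M) with hb
  obtain ⟨l, hl1, hl2⟩ : ∃ l : ℝ, (∀ x ∈ Set.Ioo l (l + r / 16), |x - xb| ≤ r / 8) ∧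
      (∀ x ∈ Set.Ioo l (l + r / 16), 1 / 16 * M ≤ |x|) := by
    rcases le_total 0 xb with hx | hx
    · refine ⟨xb + r / 16, fun x h => abs_le.2 ⟨by linarith [h.1], by linarith [h.2]⟩, fun x h => ?_⟩
      rw [hM, abs_of_nonneg hx, abs_of_nonneg (by linarith [h.1])]
      linarith [h.1]
    · refine ⟨xb - r / 8, fun x h => abs_le.2 ⟨by linarith [h.1], by linarith [h.2]⟩, fun x h => ?_⟩
      rw [hM, abs_of_nonpos hx, abs_of_nonpos (by linarith [h.2])]
      linarith [h.2]
  have hsub : Set.Ioo l (l + r / 16) ×ˢ Set.Ioo (yb - b) (yb + b) ⊆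
      {v : ℝ × ℝ | (v.1, v.2, (0 : ℝ)) ∈ ccBall α (xb, yb, 0) r} := by
    rintro ⟨x, y⟩ ⟨hx, hy⟩
    simp only at hx hy
    have hyb : |y - yb| ≤ b := abs_le.2 ⟨by linarith [hy.1], by linarith [hy.2]⟩
    refine ball_inner hα hr (hl1 x hx) (hyb.trans ?_) ?_
    · have : r * r / M ≤ r := by
        rw [div_le_iff₀ hM0]
        nlinarith [abs_nonneg xb]
      have h0 : 0 < r * r / M := by positivity
      rw [hb]
      nlinarith
    · simp only [zero_sub, abs_neg]
      rw [← hM, ← hc, abs_mul, abs_of_nonneg (Real.rpow_nonneg (abs_nonneg xb) _)]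
      calc _ ≤ M ^ α * b := by
            gcongr
            linarith
        _ = _ := by
          rw [hMα, hb]
          field_simp
  refine le_trans (ENNReal.ofReal_le_ofReal (le_of_eq ?_)) ((plane_rect_ge _ _ _ _
    ((1 / 16 * M) ^ α) (fun x hx => Real.rpow_le_rpow (by positivity) (hl2 x hx) (by linarith))
    (by positivity) (by linarith)).trans (measure_mono hsub))
  rw [Real.mul_rpow (by norm_num) hM0.le, hMα, hb]
  field_simp
  ring

/-- Ahlfors property: the perimeter measure of the section of a CC ball centred on the
plane `z = 0` is comparable with `ℒ³(B(p,r))/r`. -/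
theorem ahlfors_property (α : ℝ) (hα : 1 ≤ α) :
    ∃ C : ℝ, 0 < C ∧ ∀ xb yb : ℝ, ∀ r : ℝ, 0 < r →
      ENNReal.ofReal C⁻¹ * (volume (ccBall α (xb, yb, 0) r) / ENNReal.ofReal r) ≤
          planeMeasure α {v : ℝ × ℝ | (v.1, v.2, (0 : ℝ)) ∈ ccBall α (xb, yb, 0) r} ∧
        planeMeasure α {v : ℝ × ℝ | (v.1, v.2, (0 : ℝ)) ∈ ccBall α (xb, yb, 0) r} ≤
          ENNReal.ofReal C * (volume (ccBall α (xb, yb, 0) r) / ENNReal.ofReal r) := by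
  set k₁ : ℝ := 8 * α with hk₁
  set k₂ : ℝ := 1 / 8 * (1 / 8) ^ (α + 1) with hk₂
  set k₃ : ℝ := 4 * (α * 2 ^ α + 2) with hk₃
  set k₄ : ℝ := (1 / 16) ^ α * (1 / 8) * (1 / 8) ^ (α + 1) with hk₄
  have p1 : 0 < k₁ := by positivity
  have p2 : 0 < k₂ := by positivity
  have p3 : 0 < k₃ := by positivity
  have p4 : 0 < k₄ := by positivity
  have pC : 0 < k₁ / k₄ + k₃ / k₂ := by positivity
  refine ⟨k₁ / k₄ + k₃ / k₂, pC, fun xb yb r hr => ?_⟩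
  have vu := vol_upper hα (xb := xb) (yb := yb) hr
  have vl := vol_lower hα (xb := xb) (yb := yb) hr
  have pu := plane_upper hα (xb := xb) (yb := yb) hr
  have pl := plane_lower hα (xb := xb) (yb := yb) hr
  rw [← hk₁] at vu
  rw [← hk₂] at vl
  rw [← hk₃] at pu
  rw [← hk₄] at pl
  have hQ : 0 < r ^ 3 * (|xb| + r) ^ (α - 1) := by positivity
  set Q := r ^ 3 * (|xb| + r) ^ (α - 1)
  have vu' : volume (ccBall α (xb, yb, 0) r) / ENNReal.ofReal r ≤ ENNReal.ofReal (k₁ * Q) := by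
    refine (ENNReal.div_le_div_right vu _).trans ?_
    rw [← ENNReal.ofReal_div_of_pos hr, mul_div_assoc, div_self hr.ne', mul_one]
  have vl' : ENNReal.ofReal (k₂ * Q) ≤ volume (ccBall α (xb, yb, 0) r) / ENNReal.ofReal r := by
    refine le_trans ?_ (ENNReal.div_le_div_right vl _)
    rw [← ENNReal.ofReal_div_of_pos hr, mul_div_assoc, div_self hr.ne', mul_one]
  constructor
  · refine le_trans (mul_le_mul_right vu' _) (le_trans ?_ pl)
    rw [← ENNReal.ofReal_mul (by positivity)]
    apply ENNReal.ofReal_le_ofReal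
    rw [inv_mul_le_iff₀ pC]
    have : k₁ * Q = k₁ / k₄ * (k₄ * Q) := by field_simp
    rw [this]
    have h3 : 0 < k₃ / k₂ := by positivity
    gcongr
    linarith
  · refine pu.trans (le_trans ?_ (mul_le_mul_right vl' _))
    rw [← ENNReal.ofReal_mul (by positivity)]
    apply ENNReal.ofReal_le_ofReal
    have : k₃ * Q = k₃ / k₂ * (k₂ * Q) := by field_simp
    rw [this]
    have h3 : 0 < k₁ / k₄ := by positivity
    gcongr
    linarith
end

section
/- Let α ≥ 1. There exists a constant C > 0, depending only on α, such that for all r > 0 and z > 0 one has ∫_{D_r(z)} z^{1/α} / η^{(α+1)/α} dℋ¹(ξ,η) ≤ C r, where D_r(z) = { (ξ,η) ∈ ℝ × (0,∞) : max(|ξ|, |η|) = r and z ≤ η r^α } and ℋ¹ is the one-dimensional Hausdorff measure in the plane (with respect to the Euclidean metric). -/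
open MeasureTheory

lemma lintegral_isom_image (f : ℝ → ℝ × ℝ) (hf : Isometry f) (T : Set ℝ) (hT : MeasurableSet T)
    (g : ℝ × ℝ → ENNReal) :
    ∫⁻ w in f '' T, g w ∂(μH[1] : Measure (ℝ × ℝ)) = ∫⁻ x in T, g (f x) := by
  have he : MeasurableEmbedding f := hf.isClosedEmbedding.measurableEmbedding
  have h1 : (μH[1] : Measure (ℝ × ℝ)).restrict (f '' T) =
      Measure.map f ((volume : Measure ℝ).restrict T) := by
    have h2 := hf.map_hausdorffMeasure (d := 1) (Or.inl zero_le_one)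
    rw [hausdorffMeasure_real] at h2
    have h3 := he.restrict_map volume (f '' T)
    rw [Set.preimage_image_eq _ hf.injective, h2,
      Measure.restrict_restrict (he.measurableSet_image.2 hT),
      Set.inter_eq_left.2 (Set.image_subset_range f T)] at h3
    exact h3
  rw [h1, he.lintegral_map]

lemma side_bound (α : ℝ) (hα : 1 ≤ α) (r z : ℝ) (hr : 0 < r) (hz : 0 < z) :
    ∫⁻ y in Set.Ici (z / r ^ α), ENNReal.ofReal (z ^ (1 / α) / y ^ ((α + 1) / α))
      ≤ ENNReal.ofReal (α * r) := by
  have hα0 : 0 < α := by linarith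
  have hb : 0 < z / r ^ α := by positivity
  have hlt : -((α + 1) / α) < -1 := by
    rw [neg_lt_neg_iff, lt_div_iff₀ hα0]; linarith
  rw [← setLIntegral_congr Ioi_ae_eq_Ici]
  have hcongr : ∫⁻ y in Set.Ioi (z / r ^ α), ENNReal.ofReal (z ^ (1 / α) / y ^ ((α + 1) / α))
      = ∫⁻ y in Set.Ioi (z / r ^ α), ENNReal.ofReal (z ^ (1 / α) * y ^ (-((α + 1) / α))) := by
    refine setLIntegral_congr_fun measurableSet_Ioi fun y hy => ?_
    have : 0 < y := hb.trans hy
    rw [Real.rpow_neg this.le, div_eq_mul_inv]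
  rw [hcongr, ← ofReal_integral_eq_lintegral_ofReal]
  · refine ENNReal.ofReal_le_ofReal (le_of_eq ?_)
    rw [integral_const_mul, integral_Ioi_rpow_of_lt hlt hb]
    have e : -((α + 1) / α) + 1 = -(1 / α) := by field_simp; ring
    rw [e, Real.rpow_neg hb.le, Real.div_rpow hz.le (by positivity), ← Real.rpow_mul hr.le,
      mul_one_div_cancel hα0.ne', Real.rpow_one]
    have : 0 < z ^ (1 / α) := by positivity
    field_simp
  · exact (integrableOn_Ioi_rpow_of_lt hlt hb).const_mul _
  · refine (ae_restrict_iff' measurableSet_Ioi).2 (Filter.Eventually.of_forall fun y hy => ?_)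
    have : 0 < y := hb.trans hy
    simp only [Pi.zero_apply]
    positivity

/-- The boundary integral `J_r(z) = ∫_{D_r(z)} z^{1/α} η^{-(α+1)/α} dℋ¹` over the part
of the max-norm sphere of radius `r` where `η > 0` and `z ≤ η r^α` is at most `C r`. -/
theorem boundary_integral_bound (α : ℝ) (hα : 1 ≤ α) :
    ∃ C : ℝ, 0 < C ∧ ∀ r z : ℝ, 0 < r → 0 < z →
      (∫⁻ w in {w : ℝ × ℝ | 0 < w.2 ∧ max |w.1| |w.2| = r ∧ z ≤ w.2 * r ^ α},
          ENNReal.ofReal (z ^ (1 / α) / w.2 ^ ((α + 1) / α))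
          ∂(μH[1] : Measure (ℝ × ℝ))) ≤ ENNReal.ofReal (C * r) := by
  have hα0 : 0 < α := by linarith
  refine ⟨2 + α + α, by positivity, fun r z hr hz => ?_⟩
  have hrα : 0 < r ^ α := by positivity
  by_cases hzr : z ≤ r * r ^ α
  swap
  · have : {w : ℝ × ℝ | 0 < w.2 ∧ max |w.1| |w.2| = r ∧ z ≤ w.2 * r ^ α} = ∅ := by
      ext w
      simp only [Set.mem_ofPred_eq, Set.mem_empty_iff_false, iff_false]
      rintro ⟨h1, h2, h3⟩
      apply hzr
      have : w.2 ≤ r := (le_abs_self _).trans ((le_max_right _ _).trans h2.le)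
      exact h3.trans (by gcongr)
    rw [this]; simp
  have hv : ∀ c : ℝ, Isometry (fun y : ℝ => (c, y)) := fun c =>
    Isometry.of_dist_eq fun x y => by simp [Prod.dist_eq]
  have hh : Isometry (fun x : ℝ => (x, r)) :=
    Isometry.of_dist_eq fun x y => by simp [Prod.dist_eq]
  have hsub : {w : ℝ × ℝ | 0 < w.2 ∧ max |w.1| |w.2| = r ∧ z ≤ w.2 * r ^ α} ⊆
      ((fun x : ℝ => (x, r)) '' Set.Icc (-r) r ∪
      (fun y : ℝ => (r, y)) '' Set.Ici (z / r ^ α)) ∪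
      (fun y : ℝ => (-r, y)) '' Set.Ici (z / r ^ α) := by
    rintro ⟨x, y⟩ ⟨h1, h2, h3⟩
    simp only at h1 h2 h3
    have hy : z / r ^ α ≤ y := by rwa [div_le_iff₀ hrα]
    rcases max_choice |x| |y| with h | h
    · rw [h] at h2
      rcases (abs_eq hr.le).1 h2 with h | h
      · exact Or.inl (Or.inr ⟨y, hy, by simp [h]⟩)
      · exact Or.inr ⟨y, hy, by simp [h]⟩
    · have hx : |x| ≤ r := (le_max_left _ _).trans h2.le
      rw [h, abs_of_pos h1] at h2
      exact Or.inl (Or.inl ⟨x, abs_le.1 hx, by simp [h2]⟩)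
  refine (lintegral_mono_set hsub).trans ((lintegral_union_le _ _ _).trans ?_)
  refine (add_le_add_left (lintegral_union_le _ _ _) _).trans ?_
  rw [lintegral_isom_image _ hh _ measurableSet_Icc,
    lintegral_isom_image _ (hv r) _ measurableSet_Ici,
    lintegral_isom_image _ (hv (-r)) _ measurableSet_Ici,
    add_mul, add_mul, ENNReal.ofReal_add (by positivity) (by positivity),
    ENNReal.ofReal_add (by positivity) (by positivity)]
  refine add_le_add (add_le_add ?_ (side_bound α hα r z hr hz)) (side_bound α hα r z hr hz)
  simp only
  rw [setLIntegral_const, Real.volume_Icc, ← ENNReal.ofReal_mul (by positivity)]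
  apply ENNReal.ofReal_le_ofReal
  have h1 : z ^ (1 / α) / r ^ ((α + 1) / α) ≤ 1 := by
    rw [div_le_one (by positivity)]
    have : r ^ ((α + 1) / α) = (r * r ^ α) ^ (1 / α) := by
      rw [← Real.rpow_one_add' hr.le (by positivity), ← Real.rpow_mul hr.le]
      congr 1; ring
    rw [this]
    gcongr
  nlinarith
end

section
/- Let α ≥ 1, x′ > 0 and z′ > 0. Then the equation τ ( (x′ + τ)^α − x′^α ) = z′ has a unique solution τ > 0, and there exist constants c, C > 0 depending only on α such that c · m ≤ τ ≤ C · m, where m = min{ (z′ / x′^{α−1})^{1/2}, z′^{1/(α+1)} }. -/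
theorem tau_aux_low (α : ℝ) (hα : 1 ≤ α) (x t : ℝ) (hx : 0 < x) (ht : 0 < t) :
    t * x ^ (α - 1) ≤ (x + t) ^ α - x ^ α ∧ t ^ α ≤ (x + t) ^ α - x ^ α := by
  have key : ∀ y : ℝ, 0 < y → y ^ α = y * y ^ (α - 1) := by
    intro y hy
    rw [Real.rpow_sub_one hy.ne']
    field_simp
  rw [key _ (add_pos hx ht), key x hx, key t ht]
  have h1 : x ^ (α - 1) ≤ (x + t) ^ (α - 1) :=
    Real.rpow_le_rpow hx.le (by linarith) (by linarith)
  have h2 : t ^ (α - 1) ≤ (x + t) ^ (α - 1) :=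
    Real.rpow_le_rpow ht.le (by linarith) (by linarith)
  constructor <;> nlinarith

theorem tau_aux_up (α : ℝ) (hα : 1 ≤ α) (x t : ℝ) (hx : 0 < x) (ht : 0 < t) :
    (x + t) ^ α - x ^ α ≤ α * t * (x + t) ^ (α - 1) := by
  have hy : 0 < x + t := add_pos hx ht
  have hle : t / (x + t) ≤ 1 := by rw [div_le_one hy]; linarith
  have hb := one_add_mul_self_le_rpow_one_add (s := -(t / (x + t))) (by linarith) hα
  have e : 1 + -(t / (x + t)) = x / (x + t) := by field_simp; ring
  rw [e, Real.div_rpow hx.le hy.le, le_div_iff₀ (by positivity)] at hb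
  rw [Real.rpow_sub_one hy.ne']
  have e2 : α * t * ((x + t) ^ α / (x + t)) = α * (t / (x + t)) * (x + t) ^ α := by
    field_simp
  rw [e2]
  linarith

/-- The equation `τ((x' + τ)^α - x'^α) = z'` has a unique positive solution, which is
comparable with `min{(z'/x'^{α-1})^{1/2}, z'^{1/(α+1)}}`. -/
theorem tau_equation (α : ℝ) (hα : 1 ≤ α) :
    ∃ c C : ℝ, 0 < c ∧ 0 < C ∧ ∀ x' z' : ℝ, 0 < x' → 0 < z' →
      (∃! τ : ℝ, 0 < τ ∧ τ * ((x' + τ) ^ α - x' ^ α) = z') ∧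
      ∀ τ : ℝ, 0 < τ → τ * ((x' + τ) ^ α - x' ^ α) = z' →
        c * min ((z' / x' ^ (α - 1)) ^ ((1 : ℝ) / 2)) (z' ^ (1 / (α + 1))) ≤ τ ∧
          τ ≤ C * min ((z' / x' ^ (α - 1)) ^ ((1 : ℝ) / 2)) (z' ^ (1 / (α + 1))) := by
  have h2 : (1 : ℝ) ≤ 2 ^ (α - 1) := Real.one_le_rpow (by norm_num) (by linarith)
  obtain ⟨K, hK⟩ : ∃ K : ℝ, K = α * 2 ^ (α - 1) := ⟨_, rfl⟩
  have hK1 : 1 ≤ K := by rw [hK]; nlinarith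
  have hK0 : 0 < K := by linarith
  have hα1 : 0 < α + 1 := by linarith
  have hpow : ∀ t : ℝ, 0 < t → t ^ (α + 1) = t * t ^ α := by
    intro t ht
    rw [Real.rpow_add_one ht.ne', mul_comm]
  have hpow' : ∀ y : ℝ, 0 < y → y ^ α = y * y ^ (α - 1) := by
    intro y hy
    rw [Real.rpow_sub_one hy.ne']
    field_simp
  refine ⟨K⁻¹, 1, by positivity, one_pos, ?_⟩
  intro x z hx hz
  have hmono : ∀ s t : ℝ, 0 < s → s < t →
      s * ((x + s) ^ α - x ^ α) < t * ((x + t) ^ α - x ^ α) := by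
    intro s t hs hst
    have h1 : (x + s) ^ α ≤ (x + t) ^ α :=
      Real.rpow_le_rpow (by linarith) (by linarith) (by linarith)
    have h3 := (tau_aux_low α hα x s hx hs).2
    have h4 : 0 < s ^ α := Real.rpow_pos_of_pos hs _
    nlinarith
  refine ⟨?_, ?_⟩
  · have hex : ∃ τ : ℝ, 0 < τ ∧ τ * ((x + τ) ^ α - x ^ α) = z := by
      obtain ⟨T, hT⟩ : ∃ T : ℝ, T = z ^ (α + 1)⁻¹ := ⟨_, rfl⟩
      have hT0 : 0 < T := by rw [hT]; positivity
      have hTz : T ^ (α + 1) = z := by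
        rw [hT, Real.rpow_inv_rpow hz.le hα1.ne']
      have hcont : ContinuousOn (fun τ : ℝ => τ * ((x + τ) ^ α - x ^ α)) (Set.Icc 0 T) := by
        apply Continuous.continuousOn
        have : Continuous fun τ : ℝ => (x + τ) ^ α :=
          (continuous_const.add continuous_id).rpow_const (fun _ => Or.inr (by linarith))
        fun_prop
      have hmem : z ∈ Set.Icc ((fun τ : ℝ => τ * ((x + τ) ^ α - x ^ α)) 0)
          ((fun τ : ℝ => τ * ((x + τ) ^ α - x ^ α)) T) := by
        refine ⟨by simpa using hz.le, ?_⟩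
        have := (tau_aux_low α hα x T hx hT0).2
        rw [← hTz, hpow T hT0]
        exact mul_le_mul_of_nonneg_left this hT0.le
      obtain ⟨t, ht, hft⟩ := intermediate_value_Icc hT0.le hcont hmem
      refine ⟨t, lt_of_le_of_ne ht.1 ?_, hft⟩
      rintro rfl
      simp at hft
      linarith
    obtain ⟨t, ht, hft⟩ := hex
    refine ⟨t, ⟨ht, hft⟩, ?_⟩
    rintro s ⟨hs, hfs⟩
    rcases lt_trichotomy s t with h | h | h
    · have := hmono s t hs h
      linarith
    · exact h
    · have := hmono t s ht h
      linarith
  · intro t ht hft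
    have hxp : 0 < x ^ (α - 1) := Real.rpow_pos_of_pos hx _
    obtain ⟨l1, l2⟩ := tau_aux_low α hα x t hx ht
    have u := tau_aux_up α hα x t hx ht
    have hzu : z ≤ t * (α * t * (x + t) ^ (α - 1)) := by
      rw [← hft]
      exact mul_le_mul_of_nonneg_left u ht.le
    rw [one_div, one_div]
    constructor
    · rw [inv_mul_le_iff₀ hK0]
      rcases le_total t x with h | h
      · refine (min_le_left _ _).trans ?_
        rw [Real.rpow_inv_le_iff_of_pos (by positivity) (by positivity) (by norm_num),
          div_le_iff₀ hxp, Real.rpow_two]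
        have h3 : (x + t) ^ (α - 1) ≤ 2 ^ (α - 1) * x ^ (α - 1) := by
          rw [← Real.mul_rpow (by norm_num) hx.le]
          exact Real.rpow_le_rpow (by linarith) (by linarith) (by linarith)
        calc z ≤ t * (α * t * (x + t) ^ (α - 1)) := hzu
          _ ≤ t * (α * t * (2 ^ (α - 1) * x ^ (α - 1))) := by gcongr
          _ = K * (t ^ 2 * x ^ (α - 1)) := by rw [hK]; ring
          _ ≤ K ^ 2 * (t ^ 2 * x ^ (α - 1)) := by
              apply mul_le_mul_of_nonneg_right _ (by positivity)
              nlinarith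
          _ = _ := by ring
      · refine (min_le_right _ _).trans ?_
        rw [Real.rpow_inv_le_iff_of_pos (by positivity) (by positivity) hα1,
          Real.mul_rpow hK0.le ht.le]
        have h3 : (x + t) ^ (α - 1) ≤ 2 ^ (α - 1) * t ^ (α - 1) := by
          rw [← Real.mul_rpow (by norm_num) ht.le]
          exact Real.rpow_le_rpow (by linarith) (by linarith) (by linarith)
        have h4 : K ≤ K ^ (α + 1) := Real.self_le_rpow_of_one_le hK1 (by linarith)
        calc z ≤ t * (α * t * (x + t) ^ (α - 1)) := hzu
          _ ≤ t * (α * t * (2 ^ (α - 1) * t ^ (α - 1))) := by gcongr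
          _ = K * t ^ (α + 1) := by rw [hK, hpow t ht, hpow' t ht]; ring
          _ ≤ _ := by gcongr
    · rw [one_mul]
      apply le_min
      · rw [Real.le_rpow_inv_iff_of_pos ht.le (by positivity) (by norm_num),
          le_div_iff₀ hxp, Real.rpow_two, ← hft]
        nlinarith
      · rw [Real.le_rpow_inv_iff_of_pos ht.le hz.le hα1, hpow t ht, ← hft]
        exact mul_le_mul_of_nonneg_left l2 ht.le
end

section
/- Let α ≥ 1. For h = (h₁,h₂) with h₁, h₂ > 0 and x′ > 0 define ẑ′(x′,h) = h₂² (x′+h₁)^{α−1} + h₁ (x′+h₁)^α − ( (x′+h₁)^{α+1} − x′^{α+1} ) / (α+1), which is positive, and let τ̂(x′,h) be the unique positive solution τ of τ ( (x′+τ)^α − x′^α ) = ẑ′(x′,h). Then for every σ₀ > 0 there exists ε₀ > 0, depending only on α and σ₀, such that for all h₁, h₂ > 0 and all x′ > max(h₁,h₂)/ε₀, the function x′ ↦ x′^α τ̂(x′,h) is differentiable and | ∂/∂x′ ( x′^α τ̂(x′,h) ) | ≤ σ₀ x′^α. -/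
/-- `ẑ′(x′,h) = h₂² (x′+h₁)^{α−1} + h₁ (x′+h₁)^α − ((x′+h₁)^{α+1} − x′^{α+1})/(α+1)`. -/
noncomputable def zHat (α x' h₁ h₂ : ℝ) : ℝ :=
  h₂ ^ 2 * (x' + h₁) ^ (α - 1) + h₁ * (x' + h₁) ^ α -
    ((x' + h₁) ^ (α + 1) - x' ^ (α + 1)) / (α + 1)

/-- `τ̂(x′, z′)`: the unique positive solution `τ` of `τ((x′+τ)^α − x′^α) = z′`
(defined as the infimum of the solution set). -/
noncomputable def tauHat (α x' z' : ℝ) : ℝ :=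
  sInf {τ : ℝ | 0 < τ ∧ τ * ((x' + τ) ^ α - x' ^ α) = z'}


lemma rp_lower {p x A : ℝ} (hp : 1 ≤ p) (hx : 0 < x) (hA : 0 < A) :
    p * x ^ (p - 1) * (A - x) ≤ A ^ p - x ^ p := by
  have h := one_add_mul_self_le_rpow_one_add (s := A / x - 1) (by
    have : 0 < A / x := by positivity
    linarith) hp
  have e : (1 + (A / x - 1)) = A / x := by ring
  rw [e, Real.div_rpow hA.le hx.le] at h
  have hxp : 0 < x ^ p := by positivity
  rw [le_div_iff₀ hxp] at h
  have e2 : x ^ p = x ^ (p - 1) * x := by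
    rw [← Real.rpow_add_one hx.ne']; congr 1; ring
  have e3 : (1 + p * (A / x - 1)) * x ^ p = x ^ p + p * x ^ (p - 1) * (A - x) := by
    rw [e2]; field_simp
  linarith

lemma rp_upper {p x A : ℝ} (hp : 1 ≤ p) (hx : 0 < x) (hA : 0 < A) :
    A ^ p - x ^ p ≤ p * A ^ (p - 1) * (A - x) := by
  have := rp_lower hp hA hx
  linarith

lemma rp_split {p x : ℝ} (hx : 0 < x) : x ^ p = x ^ (p - 1) * x := by
  rw [← Real.rpow_add_one hx.ne']; congr 1; ring

lemma zHat_pos {α x h₁ h₂ : ℝ} (hα : 1 ≤ α) (hx : 0 < x) (h1 : 0 < h₁) (h2 : 0 < h₂) :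
    0 < zHat α x h₁ h₂ := by
  unfold zHat
  have h := rp_upper (p := α + 1) (x := x) (A := x + h₁) (by linarith) hx (by linarith)
  have e : α + 1 - 1 = α := by ring
  rw [e] at h
  have h' : ((x + h₁) ^ (α + 1) - x ^ (α + 1)) / (α + 1) ≤ h₁ * (x + h₁) ^ α := by
    rw [div_le_iff₀ (by linarith)]
    linarith
  have : 0 < h₂ ^ 2 * (x + h₁) ^ (α - 1) := by positivity
  linarith

lemma zHat_le {α x h₁ h₂ : ℝ} (hα : 1 ≤ α) (hx : 0 < x) (h1 : 0 < h₁) :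
    zHat α x h₁ h₂ ≤ (h₂ ^ 2 + α * h₁ ^ 2) * (x + h₁) ^ (α - 1) := by
  unfold zHat
  have h := rp_lower (p := α + 1) (x := x) (A := x + h₁) (by linarith) hx (by linarith)
  have e : α + 1 - 1 = α := by ring
  rw [e] at h
  have h' : h₁ * x ^ α ≤ ((x + h₁) ^ (α + 1) - x ^ (α + 1)) / (α + 1) := by
    rw [le_div_iff₀ (by linarith)]
    linarith
  have h3 := rp_upper (p := α) (x := x) (A := x + h₁) hα hx (by linarith)
  have h4 := mul_le_mul_of_nonneg_left h3 h1.le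
  nlinarith

/-- the `x`-derivative of `zHat`. -/
noncomputable def zHatD (α x h₁ h₂ : ℝ) : ℝ :=
  h₂ ^ 2 * ((α - 1) * (x + h₁) ^ (α - 1 - 1)) + (α * h₁ * (x + h₁) ^ (α - 1) -
    ((x + h₁) ^ α - x ^ α))

lemma zHat_hasDerivAt {α x h₁ h₂ : ℝ} (hα : 1 ≤ α) (hx : 0 < x) (h1 : 0 < h₁) :
    HasDerivAt (fun x => zHat α x h₁ h₂) (zHatD α x h₁ h₂) x := by
  unfold zHat zHatD
  have hA : HasDerivAt (fun y : ℝ => y + h₁) 1 x := (hasDerivAt_id x).add_const _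
  have ne : x + h₁ ≠ 0 := by positivity
  have a1 := hA.rpow_const (p := α - 1) (Or.inl ne)
  have a2 := hA.rpow_const (p := α) (Or.inl ne)
  have a3 := hA.rpow_const (p := α + 1) (Or.inl ne)
  have a4 := (hasDerivAt_id x).rpow_const (p := α + 1) (Or.inl hx.ne')
  have := ((a1.const_mul (h₂ ^ 2)).add (a2.const_mul h₁)).sub ((a3.sub a4).div_const (α + 1))
  refine this.congr_deriv ?_
  have e : α + 1 - 1 = α := by ring
  have : α + 1 ≠ 0 := by linarith
  simp only [e, id]
  field_simp
  ring

lemma zHatD_nonneg {α x h₁ h₂ : ℝ} (hα : 1 ≤ α) (hx : 0 < x) (h1 : 0 < h₁) :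
    0 ≤ zHatD α x h₁ h₂ := by
  unfold zHatD
  have h3 := rp_upper (p := α) (x := x) (A := x + h₁) hα hx (by linarith)
  have : 0 ≤ h₂ ^ 2 * ((α - 1) * (x + h₁) ^ (α - 1 - 1)) := by
    have : 0 ≤ α - 1 := by linarith
    positivity
  linarith

lemma PQ {α x h : ℝ} (hα : 1 ≤ α) (hx : 0 < x) (hh : 0 < h) :
    x * (α * h * (x + h) ^ (α - 1) - ((x + h) ^ α - x ^ α)) ≤
      α * (h * (x + h) ^ α - ((x + h) ^ (α + 1) - x ^ (α + 1)) / (α + 1)) := by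
  let f : ℝ → ℝ := fun h => α * (h * (x + h) ^ α - ((x + h) ^ (α + 1) - x ^ (α + 1)) / (α + 1)) -
    x * (α * h * (x + h) ^ (α - 1) - ((x + h) ^ α - x ^ α))
  have hd : ∀ y, 0 ≤ y → HasDerivAt f (α * y * (x + y) ^ (α - 1 - 1) * (α * (x + y) - (α - 1) * x)) y := by
    intro y hy
    have hA : HasDerivAt (fun y : ℝ => x + y) 1 y := (hasDerivAt_id y).const_add _
    have ne : x + y ≠ 0 := by positivity
    have a1 := hA.rpow_const (p := α - 1) (Or.inl ne)
    have a2 := hA.rpow_const (p := α) (Or.inl ne)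
    have a3 := hA.rpow_const (p := α + 1) (Or.inl ne)
    have hi := hasDerivAt_id y
    have := ((((hi.mul a2).sub ((a3.sub_const (x ^ (α + 1))).div_const (α + 1)))).const_mul α).sub
      ((((hi.const_mul α).mul a1).sub (a2.sub_const (x ^ α))).const_mul x)
    refine this.congr_deriv ?_
    have e : α + 1 - 1 = α := by ring
    have hp : 0 < x + y := by positivity
    have hne : α + 1 ≠ 0 := by linarith
    have e1 := rp_split (p := α) hp
    have e2 := rp_split (p := α - 1) hp
    simp only [e, id]
    rw [e1, e2]
    field_simp
    ring
  have hm : MonotoneOn f (Set.Ici 0) := by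
    apply monotoneOn_of_deriv_nonneg (convex_Ici 0)
    · intro y hy
      exact (hd y hy).continuousAt.continuousWithinAt
    · intro y hy
      rw [interior_Ici] at hy
      exact (hd y (le_of_lt hy)).differentiableAt.differentiableWithinAt
    · intro y hy
      rw [interior_Ici] at hy
      have hy' : 0 < y := hy
      rw [(hd y hy'.le).deriv]
      have : 0 ≤ α * (x + y) - (α - 1) * x := by nlinarith
      positivity
  have := hm (Set.mem_Ici.2 le_rfl) (Set.mem_Ici.2 hh.le) hh.le
  have h0 : f 0 = 0 := by simp [f]
  rw [h0] at this
  simp only [f] at this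
  linarith

lemma zHatD_le {α x h₁ h₂ : ℝ} (hα : 1 ≤ α) (hx : 0 < x) (h1 : 0 < h₁) :
    x * zHatD α x h₁ h₂ ≤ α * zHat α x h₁ h₂ := by
  unfold zHatD zHat
  have h := PQ hα hx h1
  have hp : 0 < x + h₁ := by positivity
  have e2 := rp_split (p := α - 1) hp
  have : x * ((α - 1) * (x + h₁) ^ (α - 1 - 1)) ≤ α * (x + h₁) ^ (α - 1) := by
    rw [e2]
    have : 0 < (x + h₁) ^ (α - 1 - 1) := by positivity
    have : 0 ≤ (α * (x + h₁) - x * (α - 1)) := by nlinarith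
    nlinarith
  have := mul_le_mul_of_nonneg_left this (sq_nonneg h₂)
  linarith

lemma F_lower {α x t : ℝ} (hα : 1 ≤ α) (hx : 0 < x) (ht : 0 < t) :
    α * t ^ 2 * x ^ (α - 1) ≤ t * ((x + t) ^ α - x ^ α) := by
  have h := rp_lower hα hx (show 0 < x + t by linarith)
  have := mul_le_mul_of_nonneg_left h ht.le
  nlinarith

lemma F_mono {α x s t : ℝ} (hα : 1 ≤ α) (hx : 0 < x) (hs : 0 < s) (hst : s < t) :
    s * ((x + s) ^ α - x ^ α) < t * ((x + t) ^ α - x ^ α) := by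
  have h1 : x ^ α < (x + s) ^ α := Real.rpow_lt_rpow hx.le (by linarith) (by linarith)
  have h2 : (x + s) ^ α < (x + t) ^ α := Real.rpow_lt_rpow (by linarith) (by linarith) (by linarith)
  apply mul_lt_mul'' hst (by linarith) hs.le (by linarith)

lemma F_inj {α x s t : ℝ} (hα : 1 ≤ α) (hx : 0 < x) (hs : 0 < s) (ht : 0 < t)
    (h : s * ((x + s) ^ α - x ^ α) = t * ((x + t) ^ α - x ^ α)) : s = t := by
  rcases lt_trichotomy s t with h' | h' | h'
  · exact absurd h (F_mono hα hx hs h').ne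
  · exact h'
  · exact absurd h (F_mono hα hx ht h').ne'

lemma F_exists {α x z : ℝ} (hα : 1 ≤ α) (hx : 0 < x) (hz : 0 < z) :
    ∃ t, 0 < t ∧ t * ((x + t) ^ α - x ^ α) = z := by
  have hc : ContinuousOn (fun t : ℝ => t * ((x + t) ^ α - x ^ α)) (Set.Icc 0 (1 + z / (α * x ^ (α - 1)))) := by
    apply ContinuousOn.mul continuousOn_id
    apply ContinuousOn.sub _ continuousOn_const
    apply ContinuousOn.rpow_const (by fun_prop)
    intro y hy
    exact Or.inr (by linarith)
  have hk : 0 < α * x ^ (α - 1) := by positivity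
  have hM : 0 < 1 + z / (α * x ^ (α - 1)) := by positivity
  have hl := F_lower hα hx hM
  have hge : z ≤ α * (1 + z / (α * x ^ (α - 1))) ^ 2 * x ^ (α - 1) := by
    have : z = (z / (α * x ^ (α - 1))) * (α * x ^ (α - 1)) := by field_simp
    have h0 : 0 < z / (α * x ^ (α - 1)) := by positivity
    have h1 : z / (α * x ^ (α - 1)) ≤ (1 + z / (α * x ^ (α - 1))) ^ 2 := by nlinarith
    have := mul_le_mul_of_nonneg_right h1 hk.le
    nlinarith
  obtain ⟨t, ht, hF⟩ := intermediate_value_Icc hM.le hc (show z ∈ Set.Icc _ _ from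
    ⟨by simpa using hz.le, hge.trans hl⟩)
  refine ⟨t, lt_of_le_of_ne ht.1 ?_, hF⟩
  rintro rfl
  simp at hF
  linarith

lemma tauHat_eq {α x z t : ℝ} (hα : 1 ≤ α) (hx : 0 < x) (ht : 0 < t)
    (h : t * ((x + t) ^ α - x ^ α) = z) : tauHat α x z = t := by
  unfold tauHat
  have : {τ : ℝ | 0 < τ ∧ τ * ((x + τ) ^ α - x ^ α) = z} = {t} := by
    ext s
    constructor
    · rintro ⟨hs, he⟩
      exact F_inj hα hx hs ht (he.trans h.symm)
    · rintro rfl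
      exact ⟨ht, h⟩
  rw [this, csInf_singleton]

lemma tauHat_spec {α x z : ℝ} (hα : 1 ≤ α) (hx : 0 < x) (hz : 0 < z) :
    0 < tauHat α x z ∧
      tauHat α x z * ((x + tauHat α x z) ^ α - x ^ α) = z := by
  obtain ⟨t, ht, h⟩ := F_exists hα hx hz
  rw [tauHat_eq hα hx ht h]
  exact ⟨ht, h⟩

lemma tauHat_diff {α x h₁ h₂ : ℝ} (hα : 1 ≤ α) (hx : 0 < x) (h1 : 0 < h₁) (h2 : 0 < h₂) :
    ∃ T, HasDerivAt (fun x => tauHat α x (zHat α x h₁ h₂)) T x := by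
  obtain ⟨ht, hF⟩ := tauHat_spec hα hx (zHat_pos hα hx h1 h2)
  set t := tauHat α x (zHat α x h₁ h₂) with htdef
  let G : ℝ × ℝ → ℝ := fun p => p.2 * ((p.1 + p.2) ^ α - p.1 ^ α) - zHat α p.1 h₁ h₂
  have hG : ContDiffAt ℝ 1 G (x, t) := by
    have c1 : ContDiffAt ℝ 1 (fun p : ℝ × ℝ => p.1) (x, t) := contDiffAt_fst
    have c2 : ContDiffAt ℝ 1 (fun p : ℝ × ℝ => p.2) (x, t) := contDiffAt_snd
    have c3 : ContDiffAt ℝ 1 (fun p : ℝ × ℝ => p.1 + h₁) (x, t) := c1.add contDiffAt_const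
    have n3 : x + h₁ ≠ 0 := by positivity
    have n2 : x + t ≠ 0 := by positivity
    have d (q : ℝ) : ContDiffAt ℝ 1 (fun p : ℝ × ℝ => (p.1 + h₁) ^ q) (x, t) :=
      c3.rpow_const_of_ne n3
    have e (q : ℝ) : ContDiffAt ℝ 1 (fun p : ℝ × ℝ => p.1 ^ q) (x, t) :=
      c1.rpow_const_of_ne hx.ne'
    have k : ContDiffAt ℝ 1 (fun p : ℝ × ℝ => (p.1 + p.2) ^ α) (x, t) :=
      (c1.add c2).rpow_const_of_ne n2
    have kz : ContDiffAt ℝ 1 (fun p : ℝ × ℝ => zHat α p.1 h₁ h₂) (x, t) := by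
      unfold zHat
      exact ((contDiffAt_const.mul (d _)).add (contDiffAt_const.mul (d _))).sub
        (((d _).sub (e _)).div_const _)
    exact (c2.mul (k.sub (e _))).sub kz
  have dG := hG.hasStrictFDerivAt one_ne_zero
  have hder : HasDerivAt (fun s => G (x, s)) (fderiv ℝ G (x, t) (0, 1)) t := by
    have := dG.hasFDerivAt.comp_hasDerivAt t ((hasDerivAt_const t x).prodMk (hasDerivAt_id t))
    exact this
  have hder2 : HasDerivAt (fun s => G (x, s))
      (1 * ((x + t) ^ α - x ^ α) + t * (1 * α * (x + t) ^ (α - 1))) t := by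
    have hA : HasDerivAt (fun y : ℝ => x + y) 1 t := (hasDerivAt_id t).const_add _
    have ne : x + t ≠ 0 := by positivity
    have a2 := hA.rpow_const (p := α) (Or.inl ne)
    exact ((hasDerivAt_id t).mul (a2.sub_const (x ^ α))).sub_const (zHat α x h₁ h₂)
  have hc : fderiv ℝ G (x, t) (0, 1) ≠ 0 := by
    rw [hder.unique hder2]
    have h1 : x ^ α < (x + t) ^ α := Real.rpow_lt_rpow hx.le (by linarith) (by linarith)
    have : 0 < t * (1 * α * (x + t) ^ (α - 1)) := by positivity
    linarith
  have hinv : (fderiv ℝ G (x, t) ∘L .inr ℝ ℝ ℝ).IsInvertible := by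
    refine ⟨ContinuousLinearEquiv.unitsEquivAut ℝ (Units.mk0 _ hc), ?_⟩
    ext
    simp
  have hG0 : G (x, t) = 0 := by simp only [G]; linarith
  have hev := dG.eventually_apply_implicitFunctionOfProdDomain hinv
  have hψ := dG.tendsto_implicitFunctionOfProdDomain hinv
  have hψd := dG.hasStrictFDerivAt_implicitFunctionOfProdDomain hinv
  set ψ := dG.implicitFunctionOfProdDomain hinv
  refine ⟨_, hψd.hasFDerivAt.hasDerivAt.congr_of_eventuallyEq ?_⟩
  simp only at hev hψ
  filter_upwards [hev, hψ.eventually (lt_mem_nhds ht), lt_mem_nhds hx] with y h3 h4 h5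
  rw [hG0] at h3
  exact tauHat_eq hα h5 h4 (by simp only [G] at h3; linarith)

lemma tauHat_deriv_bound {α x h₁ h₂ : ℝ} (hα : 1 ≤ α) (hx : 0 < x) (h1 : 0 < h₁) (h2 : 0 < h₂) :
    ∃ T, HasDerivAt (fun x => tauHat α x (zHat α x h₁ h₂)) T x ∧
      |T| * x ≤ α * tauHat α x (zHat α x h₁ h₂) := by
  obtain ⟨T, hT⟩ := tauHat_diff hα hx h1 h2
  refine ⟨T, hT, ?_⟩
  obtain ⟨ht, hF⟩ := tauHat_spec hα hx (zHat_pos hα hx h1 h2)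
  have hzd := zHat_hasDerivAt (h₂ := h₂) hα hx h1
  have hz0 := zHatD_nonneg (h₂ := h₂) hα hx h1
  have hz1 := zHatD_le (h₂ := h₂) hα hx h1
  have hs : x + tauHat α x (zHat α x h₁ h₂) ≠ 0 := by positivity
  have b1 := ((hasDerivAt_id x).add hT).rpow_const (p := α) (Or.inl hs)
  have b2 := (hasDerivAt_id x).rpow_const (p := α) (Or.inl hx.ne')
  have b3 := hT.mul (b1.sub b2)
  have b4 := b3.congr_of_eventuallyEq (f₁ := fun x => zHat α x h₁ h₂) (by
    filter_upwards [lt_mem_nhds hx] with y hy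
    exact (tauHat_spec hα hy (zHat_pos hα hy h1 h2)).2.symm)
  have key := b4.unique hzd
  simp only [id, Pi.add_apply, Pi.sub_apply] at key
  set t := tauHat α x (zHat α x h₁ h₂) with htdef
  set z := zHat α x h₁ h₂
  set z' := zHatD α x h₁ h₂
  have hp : 0 < x + t := by positivity
  have e1 := rp_split (p := α) hp
  have e2 := rp_split (p := α) hx
  have hmono : x ^ (α - 1) ≤ (x + t) ^ (α - 1) :=
    Real.rpow_le_rpow hx.le (by linarith) (by linarith)
  have hA : 0 < (x + t) ^ (α - 1) := by positivity
  have hlt : x ^ α < (x + t) ^ α := Real.rpow_lt_rpow hx.le (by linarith) (by linarith)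
  set Δ := (x + t) ^ α - x ^ α with hΔ
  set A := (x + t) ^ (α - 1)
  set B := x ^ (α - 1)
  have hΔ0 : 0 < Δ := by linarith
  have hK : 0 < Δ + t * α * A := by positivity
  have hTeq : T * (Δ + t * α * A) = z' - t * α * (A - B) := by linear_combination key
  have hFx : x * (A - B) ≤ Δ := by
    rw [hΔ, e1, e2]; nlinarith
  have u1 : (T * x) * (Δ + t * α * A) ≤ (α * t) * (Δ + t * α * A) := by
    have : 0 ≤ x * (t * α * (A - B)) := by
      have : 0 ≤ A - B := by linarith
      positivity
    have : 0 ≤ α * t * (t * α * A) := by positivity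
    have : x * z' ≤ α * (t * Δ) := by rw [hF]; exact hz1
    have : (T * x) * (Δ + t * α * A) = x * z' - x * (t * α * (A - B)) := by
      linear_combination x * hTeq
    nlinarith
  have u2 : (-(α * t)) * (Δ + t * α * A) ≤ (T * x) * (Δ + t * α * A) := by
    have : 0 ≤ α * t * (t * α * A) := by positivity
    have : 0 ≤ x * z' := by positivity
    have : (t * α) * (x * (A - B)) ≤ (t * α) * Δ := mul_le_mul_of_nonneg_left hFx (by positivity)
    have : (T * x) * (Δ + t * α * A) = x * z' - x * (t * α * (A - B)) := by
      linear_combination x * hTeq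
    nlinarith
  have v1 := le_of_mul_le_mul_right u1 hK
  have v2 := le_of_mul_le_mul_right u2 hK
  have : |T| * x = |T * x| := by rw [abs_mul, abs_of_pos hx]
  rw [this, abs_le]
  exact ⟨v2, v1⟩

lemma tauHat_small {α x h₁ h₂ ε : ℝ} (hα : 1 ≤ α) (hx : 0 < x) (h1 : 0 < h₁) (h2 : 0 < h₂)
    (hε0 : 0 < ε) (hε : ε ≤ 1) (g1 : h₁ ≤ ε * x) (g2 : h₂ ≤ ε * x) :
    tauHat α x (zHat α x h₁ h₂) ≤ ε * 2 ^ α * x := by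
  obtain ⟨ht, hF⟩ := tauHat_spec hα hx (zHat_pos hα hx h1 h2)
  have hz := zHat_le (h₂ := h₂) hα hx h1
  have hl := F_lower hα hx ht
  rw [hF] at hl
  set t := tauHat α x (zHat α x h₁ h₂)
  have hB : 0 < x ^ (α - 1) := by positivity
  have k1 : (x + h₁) ^ (α - 1) ≤ 2 ^ (α - 1) * x ^ (α - 1) := by
    rw [← Real.mul_rpow (by norm_num) hx.le]
    exact Real.rpow_le_rpow (by positivity) (by nlinarith) (by linarith)
  have k2 : h₂ ^ 2 + α * h₁ ^ 2 ≤ α * 2 * (ε * x) ^ 2 := by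
    have : h₁ ^ 2 ≤ (ε * x) ^ 2 := by gcongr
    have : h₂ ^ 2 ≤ (ε * x) ^ 2 := by gcongr
    nlinarith [sq_nonneg (ε * x)]
  have k3 : (h₂ ^ 2 + α * h₁ ^ 2) * (x + h₁) ^ (α - 1) ≤
      (α * 2 * (ε * x) ^ 2) * (2 ^ (α - 1) * x ^ (α - 1)) := by gcongr
  have e : (2 : ℝ) ^ α = 2 ^ (α - 1) * 2 := rp_split (by norm_num)
  have k4 : t ^ 2 * (α * x ^ (α - 1)) ≤ ((ε * x) ^ 2 * 2 ^ α) * (α * x ^ (α - 1)) := by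
    rw [e]; nlinarith
  have k5 := le_of_mul_le_mul_right k4 (by positivity)
  have k6 : (1 : ℝ) ≤ 2 ^ α := Real.one_le_rpow (by norm_num) (by linarith)
  apply le_of_sq_le_sq _ (by positivity)
  calc t ^ 2 ≤ _ := k5
    _ ≤ (ε * x) ^ 2 * (2 ^ α * 2 ^ α) := by
        apply mul_le_mul_of_nonneg_left _ (sq_nonneg _); nlinarith
    _ = _ := by ring

/-- Lemma 6.2: the derivative of `x′ ↦ x′^α τ̂(x′,h)` is small compared with `x′^α` in
the noncharacteristic regime `x′ > max(h₁,h₂)/ε₀`. -/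
theorem deriv_tauHat_small (α : ℝ) (hα : 1 ≤ α) :
    ∀ σ₀ : ℝ, 0 < σ₀ → ∃ ε₀ : ℝ, 0 < ε₀ ∧ ∀ h₁ h₂ : ℝ, 0 < h₁ → 0 < h₂ →
      ∀ x' : ℝ, max h₁ h₂ / ε₀ < x' →
        0 < zHat α x' h₁ h₂ ∧
        ∃ D : ℝ, HasDerivAt (fun x => x ^ α * tauHat α x (zHat α x h₁ h₂)) D x' ∧
          |D| ≤ σ₀ * x' ^ α := by
  intro σ₀ hσ
  have hP : 0 < 2 * α * (2 : ℝ) ^ α := by positivity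
  have hεp : 0 < min 1 (σ₀ / (2 * α * (2 : ℝ) ^ α)) := lt_min one_pos (by positivity)
  refine ⟨min 1 (σ₀ / (2 * α * (2 : ℝ) ^ α)), hεp, ?_⟩
  set ε := min 1 (σ₀ / (2 * α * (2 : ℝ) ^ α))
  have hε1 : ε ≤ 1 := min_le_left _ _
  have hε2 : ε * (2 * α * (2 : ℝ) ^ α) ≤ σ₀ := by
    rw [← le_div_iff₀ hP]; exact min_le_right _ _
  intro h₁ h₂ h1 h2 x hxm
  have hx : 0 < x := lt_trans (div_pos (lt_max_of_lt_left h1) hεp) hxm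
  rw [div_lt_iff₀ hεp, max_lt_iff] at hxm
  refine ⟨zHat_pos hα hx h1 h2, ?_⟩
  obtain ⟨T, hT, hTb⟩ := tauHat_deriv_bound hα hx h1 h2
  have hs := tauHat_small hα hx h1 h2 hεp hε1 (by linarith [hxm.1]) (by linarith [hxm.2])
  have ht := (tauHat_spec hα hx (zHat_pos hα hx h1 h2)).1
  have hd := ((hasDerivAt_id x).rpow_const (p := α) (Or.inl hx.ne')).mul hT
  refine ⟨_, hd, ?_⟩
  simp only [id]
  set t := tauHat α x (zHat α x h₁ h₂)
  have hB : 0 < x ^ (α - 1) := by positivity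
  rw [rp_split (p := α) hx]
  calc |1 * α * x ^ (α - 1) * t + x ^ (α - 1) * x * T|
      ≤ |1 * α * x ^ (α - 1) * t| + |x ^ (α - 1) * x * T| := abs_add_le _ _
    _ = x ^ (α - 1) * (α * t + |T| * x) := by
        rw [abs_of_pos (by positivity), abs_mul, abs_of_pos (by positivity)]; ring
    _ ≤ x ^ (α - 1) * (σ₀ * x) := by
        apply mul_le_mul_of_nonneg_left _ hB.le
        have := mul_le_mul_of_nonneg_left hs (show 0 ≤ 2 * α by linarith)
        have := mul_le_mul_of_nonneg_right hε2 hx.le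
        nlinarith
    _ = _ := by ring
end

section
/- Let α ≥ 1 and x′ > 0, and define φ(t) = ( (x′ + t)^{α+1} − x′^{α+1} ) / ( (α+1) (x′ + t)^α ) for t ≥ 0. Then φ is differentiable on (0,∞) and 1/(α+1) ≤ φ′(t) ≤ 1 for all t > 0; consequently φ(t)/t ∈ [1/(α+1), 1] for all t > 0, and φ is a strictly increasing bijection from [0,∞) onto [0,∞). -/
/-- `φ(t) = ((x′+t)^{α+1} − x′^{α+1}) / ((α+1)(x′+t)^α)`. -/
noncomputable def phiFn (α x' t : ℝ) : ℝ :=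
  ((x' + t) ^ (α + 1) - x' ^ (α + 1)) / ((α + 1) * (x' + t) ^ α)

theorem phiFn_hasDeriv (α x' : ℝ) (hα : 1 ≤ α) (hx : 0 < x') (t : ℝ) (ht : 0 ≤ t) :
    ∃ D : ℝ, HasDerivAt (phiFn α x') D t ∧ 1 / (α + 1) ≤ D ∧ D ≤ 1 := by
  have hs : 0 < x' + t := by linarith
  have ha : 0 < α + 1 := by linarith
  have hP : 0 < (x' + t) ^ (α + 1) := Real.rpow_pos_of_pos hs _
  have hC : 0 < x' ^ (α + 1) := Real.rpow_pos_of_pos hx _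
  have hle : x' ^ (α + 1) ≤ (x' + t) ^ (α + 1) :=
    Real.rpow_le_rpow hx.le (by linarith) ha.le
  have hr0 : 0 ≤ x' ^ (α + 1) / (x' + t) ^ (α + 1) := by positivity
  have hr1 : x' ^ (α + 1) / (x' + t) ^ (α + 1) ≤ 1 := (div_le_one hP).2 hle
  refine ⟨(1 + α * (x' ^ (α + 1) / (x' + t) ^ (α + 1))) / (α + 1), ?_, ?_, ?_⟩
  · have hid : HasDerivAt (fun u : ℝ => x' + u) 1 t := (hasDerivAt_id t).const_add x'
    have h1 := hid.rpow_const (p := -α) (Or.inl hs.ne')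
    have h2 := ((hid.sub (h1.const_mul (x' ^ (α + 1)))).div_const (α + 1))
    have heq : phiFn α x' =ᶠ[nhds t]
        (fun u => ((x' + u) - x' ^ (α + 1) * (x' + u) ^ (-α)) / (α + 1)) := by
      filter_upwards [lt_mem_nhds (show -x' < t by linarith)] with u hu
      have hu' : 0 < x' + u := by linarith
      have hQ : 0 < (x' + u) ^ α := Real.rpow_pos_of_pos hu' _
      unfold phiFn
      rw [Real.rpow_neg hu'.le, Real.rpow_add hu', Real.rpow_one]
      field_simp
    refine (HasDerivAt.congr_of_eventuallyEq ?_ heq)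
    refine h2.congr_deriv ?_
    rw [show -α - 1 = -(α + 1) by ring, Real.rpow_neg hs.le]
    ring
  · gcongr
    have : 0 ≤ α * (x' ^ (α + 1) / (x' + t) ^ (α + 1)) := by positivity
    linarith
  · rw [div_le_one ha]
    nlinarith

/-- Properties of `φ`: its derivative lies in `[1/(α+1), 1]` on `(0,∞)`, consequently
`φ(t)/t ∈ [1/(α+1), 1]`, and `φ` is a strictly increasing bijection of `[0,∞)` onto
itself. -/
theorem phiFn_properties (α x' : ℝ) (hα : 1 ≤ α) (hx : 0 < x') :
    (∀ t : ℝ, 0 < t → ∃ D : ℝ, HasDerivAt (fun u => phiFn α x' u) D t ∧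
        1 / (α + 1) ≤ D ∧ D ≤ 1) ∧
      (∀ t : ℝ, 0 < t → 1 / (α + 1) ≤ phiFn α x' t / t ∧ phiFn α x' t / t ≤ 1) ∧
      StrictMonoOn (phiFn α x') (Set.Ici 0) ∧
      Set.BijOn (phiFn α x') (Set.Ici 0) (Set.Ici 0) := by
  have hD := phiFn_hasDeriv α x' hα hx
  have ha : 0 < α + 1 := by linarith
  have hc : ContinuousOn (phiFn α x') (Set.Ici 0) := fun t ht => by
    obtain ⟨D, h, -⟩ := hD t ht
    exact h.continuousAt.continuousWithinAt
  have h0 : phiFn α x' 0 = 0 := by simp [phiFn]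
  have hm : StrictMonoOn (phiFn α x') (Set.Ici 0) := by
    refine strictMonoOn_of_deriv_pos (convex_Ici 0) hc fun t ht => ?_
    rw [interior_Ici] at ht
    obtain ⟨D, h, h1, -⟩ := hD t (le_of_lt ht)
    rw [h.deriv]
    exact lt_of_lt_of_le (by positivity) h1
  have hq : ∀ t : ℝ, 0 < t → 1 / (α + 1) ≤ phiFn α x' t / t ∧ phiFn α x' t / t ≤ 1 := by
    intro t ht
    obtain ⟨c, hct, he⟩ := exists_deriv_eq_slope (phiFn α x') ht
      (hc.mono Set.Icc_subset_Ici_self) (fun u hu => by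
        obtain ⟨D, h, -⟩ := hD u hu.1.le
        exact h.differentiableAt.differentiableWithinAt)
    obtain ⟨D, h, h1, h2⟩ := hD c hct.1.le
    rw [h.deriv, h0, sub_zero, sub_zero] at he
    rw [← he]
    exact ⟨h1, h2⟩
  refine ⟨fun t ht => hD t ht.le, hq, hm, ?_, hm.injOn, ?_⟩
  · intro t ht
    have := hm.monotoneOn (Set.mem_Ici.2 le_rfl) ht ht
    rwa [h0] at this
  · intro y hy
    rcases eq_or_lt_of_le (Set.mem_Ici.1 hy) with rfl | hy'
    · exact ⟨0, Set.mem_Ici.2 le_rfl, h0⟩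
    have hT : 0 < (α + 1) * y := by positivity
    have hb : y ≤ phiFn α x' ((α + 1) * y) := by
      have := (hq _ hT).1
      rw [div_le_div_iff₀ ha hT] at this
      nlinarith
    obtain ⟨u, hu, hy⟩ := intermediate_value_Icc hT.le
      (hc.mono Set.Icc_subset_Ici_self) ⟨by rw [h0]; exact hy'.le, hb⟩
    exact ⟨u, hu.1, hy⟩
end
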